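/- For n ≥ 3, the Castelnuovo–Mumford regularity of S/I and of S/in_<(I) both equal 3, where I is the join-meet ideal of the diamond lattice D_{n+2} and in_<(I) its initial ideal with respect to the reverse lexicographic order induced by x > y_1 > ⋯ > y_n > z. -/

import Mathlib

open MvPolynomial

noncomputable def xP (K : Type*) [Field K] (n : ℕ) : MvPolynomial (Fin (n + 2)) K := X 0
noncomputable def zP (K : Type*) [Field K] (n : ℕ) : MvPolynomial (Fin (n + 2)) K :=
  X (Fin.last (n + 1))
noncomputable def yP (K : Type*) [Field K] (n : ℕ) (i : Fin n) : MvPolynomial (Fin (n + 2)) K :=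
  X i.succ.castSucc

/-- The join-meet ideal `I` of the diamond lattice `D_{n+2}`. -/
noncomputable def diamondIdeal (K : Type*) [Field K] (n : ℕ) :
    Ideal (MvPolynomial (Fin (n + 2)) K) :=
  Ideal.span {f | ∃ i j : Fin n, i < j ∧ f = yP K n i * yP K n j - xP K n * zP K n}

/-- The initial ideal `in_<(I)` of `I` w.r.t. the reverse lexicographic order induced by
`x > y_1 > ⋯ > y_n > z`, as computed in the paper:
`(y_i y_j : i < j) + (x y_k z : k ≤ n-1) + (x y_n² z)`. -/
noncomputable def diamondIni (K : Type*) [Field K] (n : ℕ) (hn : 1 ≤ n) :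
    Ideal (MvPolynomial (Fin (n + 2)) K) :=
  Ideal.span
    ({f | ∃ i j : Fin n, i < j ∧ f = yP K n i * yP K n j} ∪
      {f | ∃ k : Fin n, (k : ℕ) < n - 1 ∧ f = xP K n * yP K n k * zP K n} ∪
      {xP K n * (yP K n ⟨n - 1, by omega⟩) ^ 2 * zP K n})

def mdeg {σ : Type*} (m : σ →₀ ℕ) : ℕ := m.sum fun _ e => e

/-- A minimal graded free resolution
`⋯ → F_{i+1} → F_i → ⋯ → F_0 → S/I → 0` of `S/I` over `S = K[x_s : s ∈ σ]`.
`F_i` is free with finite homogeneous basis `B i`, the basis element `b : B i` having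
degree `deg i b`; the differentials are graded and have entries in the graded maximal
ideal (minimality); `ε` is a lift of the augmentation `F_0 → S/I`. -/
structure MinGradedFreeRes (K : Type*) [Field K] (σ : Type*) (I : Ideal (MvPolynomial σ K)) where
  B : ℕ → Type
  finB : ∀ i, Finite (B i)
  deg : ∀ i, B i → ℕ
  d : ∀ i, ((B (i + 1)) →₀ MvPolynomial σ K) →ₗ[MvPolynomial σ K] ((B i) →₀ MvPolynomial σ K)
  ε : ((B 0) →₀ MvPolynomial σ K) →ₗ[MvPolynomial σ K] MvPolynomial σ K
  ε_homog : ∀ b : B 0, (ε (Finsupp.single b 1)).IsHomogeneous (deg 0 b)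
  surj : ∀ s : MvPolynomial σ K, ∃ t, ε t - s ∈ I
  exact0 : LinearMap.range (d 0) = Submodule.comap ε (I : Submodule _ _)
  exact : ∀ i, LinearMap.range (d (i + 1)) = LinearMap.ker (d i)
  homog : ∀ i (b : B (i + 1)) (c : B i),
    ∀ m ∈ ((d i (Finsupp.single b 1)) c).support, mdeg m + deg i c = deg (i + 1) b
  minimal : ∀ i (b : B (i + 1)) (c : B i), coeff 0 ((d i (Finsupp.single b 1)) c) = 0

/-- The graded Betti number `β_{i,j}(S/I)` read off from a minimal graded free resolution:
the number of basis elements of `F_i` of degree `j`. -/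
noncomputable def MinGradedFreeRes.betti {K : Type*} [Field K] {σ : Type*}
    {I : Ideal (MvPolynomial σ K)} (F : MinGradedFreeRes K σ I) (i j : ℕ) : ℕ :=
  Nat.card {b : F.B i // F.deg i b = j}

/-- `reg(S/I) = r`: in any minimal graded free resolution all shifts satisfy `j - i ≤ r`,
with equality attained, i.e. `max { j - i : β_{i,j}(S/I) ≠ 0 } = r`. -/
def RegEq {K : Type*} [Field K] {σ : Type*} (I : Ideal (MvPolynomial σ K)) (r : ℕ) : Prop :=
  Nonempty (MinGradedFreeRes K σ I) ∧
    ∀ F : MinGradedFreeRes K σ I,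
      (∀ i (b : F.B i), F.deg i b ≤ i + r) ∧ (∃ i, ∃ b : F.B i, F.deg i b = i + r)


section grading
variable {K : Type*} [Field K] {σ : Type*}

theorem mdeg_eq (m : σ →₀ ℕ) : mdeg m = m.degree := rfl

/-- The part of `f` living in degree `j` when the generator sits in degree `a`. -/
noncomputable def gp (a j : ℕ) : MvPolynomial σ K →ₗ[K] MvPolynomial σ K :=
  if a ≤ j then homogeneousComponent (j - a) else 0

theorem coeff_gp (a j : ℕ) (m : σ →₀ ℕ) (f : MvPolynomial σ K) :
    coeff m (gp a j f) = if mdeg m + a = j then coeff m f else 0 := by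
  classical
  unfold gp
  split_ifs with h1 h2 h2
  · rw [coeff_homogeneousComponent, if_pos (by rw [← mdeg_eq]; omega)]
  · rw [coeff_homogeneousComponent, if_neg (by rw [← mdeg_eq]; omega)]
  · omega
  · simp

theorem gp_mul {a b : ℕ} (j : ℕ) (f p : MvPolynomial σ K)
    (hp : ∀ m ∈ p.support, mdeg m + a = b) : gp a j (f * p) = gp b j f * p := by
  classical
  ext m
  rw [coeff_gp, coeff_mul, coeff_mul]
  split_ifs with h
  · refine Finset.sum_congr rfl fun x hx => ?_
    rw [Finset.HasAntidiagonal.mem_antidiagonal] at hx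
    by_cases h0 : coeff x.2 p = 0
    · simp [h0]
    · have := hp x.2 (mem_support_iff.2 h0)
      have h3 : mdeg m = mdeg x.1 + mdeg x.2 := by rw [← hx, mdeg_eq, map_add]; rfl
      rw [coeff_gp, if_pos (by omega)]
  · symm
    refine Finset.sum_eq_zero fun x hx => ?_
    rw [Finset.HasAntidiagonal.mem_antidiagonal] at hx
    by_cases h0 : coeff x.2 p = 0
    · simp [h0]
    · have := hp x.2 (mem_support_iff.2 h0)
      have h3 : mdeg m = mdeg x.1 + mdeg x.2 := by rw [← hx, mdeg_eq, map_add]; rfl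
      rw [coeff_gp, if_neg (by omega), zero_mul]

theorem gp_gp (a j : ℕ) (f : MvPolynomial σ K) : gp a j (gp a j f) = gp a j f := by
  ext m; simp only [coeff_gp]; split_ifs <;> rfl

theorem gp_succ (a j : ℕ) (f : MvPolynomial σ K) : gp (a + 1) (j + 1) f = gp a j f := by
  ext m; simp only [coeff_gp]; congr 1; simp only [eq_iff_iff]; omega

theorem hom_supp {d : ℕ} {p : MvPolynomial σ K} (hp : p.IsHomogeneous d) :
    ∀ m ∈ p.support, mdeg m = d := fun m hm => by
  by_contra h
  exact mem_support_iff.1 hm (hp.coeff_eq_zero h)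

theorem gp_mul_hom {d : ℕ} (a j : ℕ) (f p : MvPolynomial σ K) (hp : p.IsHomogeneous d) :
    gp a j (f * p) = gp (d + a) j f * p :=
  gp_mul j f p fun m hm => by rw [hom_supp hp m hm]

theorem gp_isHom (a j d : ℕ) (h : d + a = j) (f : MvPolynomial σ K) :
    (gp a j f).IsHomogeneous d := by
  unfold gp
  rw [if_pos (by omega)]
  have : j - a = d := by omega
  rw [this]; exact homogeneousComponent_isHomogeneous _ _

theorem gp_eq_self {d : ℕ} (a j : ℕ) (h : d + a = j) {f : MvPolynomial σ K}
    (hf : f.IsHomogeneous d) : gp a j f = f := by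
  ext m; rw [coeff_gp]; split_ifs with h1
  · rfl
  · symm; exact hf.coeff_eq_zero (by rw [← mdeg_eq]; omega)

/-- homogeneous ideals -/
def HI (L : Ideal (MvPolynomial σ K)) : Prop := ∀ a j f, f ∈ L → gp a j f ∈ L

theorem HI_span (s : Set (MvPolynomial σ K)) (hs : ∀ f ∈ s, ∃ d, f.IsHomogeneous d) :
    HI (Ideal.span s) := by
  intro a j f hf
  induction hf using Submodule.span_induction generalizing a j with
  | mem x hx =>
    obtain ⟨d, hd⟩ := hs x hx
    have := gp_mul_hom a j 1 x hd
    rw [one_mul] at this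
    rw [this]
    exact Ideal.mul_mem_left _ _ (Ideal.subset_span hx)
  | zero => simp
  | add x y _ _ h1 h2 => rw [map_add]; exact Ideal.add_mem _ (h1 a j) (h2 a j)
  | smul r x _ h =>
    -- decompose x into homogeneous parts
    rw [smul_eq_mul]
    have hx : x = ∑ i ∈ Finset.range (x.totalDegree + 1), gp 0 i x := by
      conv_lhs => rw [← sum_homogeneousComponent x]
      refine Finset.sum_congr rfl fun i _ => by simp [gp]
    rw [hx, Finset.mul_sum, map_sum]
    refine Ideal.sum_mem _ fun i _ => ?_
    rw [gp_mul_hom a j r (gp 0 i x) (gp_isHom 0 i i rfl x)]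
    exact Ideal.mul_mem_left _ _ (h 0 i)

theorem HI_sup {A B : Ideal (MvPolynomial σ K)} (hA : HI A) (hB : HI B) : HI (A ⊔ B) := by
  intro a j f hf
  obtain ⟨u, hu, v, hv, rfl⟩ := Submodule.mem_sup.1 hf
  rw [map_add]
  exact Submodule.add_mem_sup (hA a j u hu) (hB a j v hv)

theorem HI_span_singleton {l : MvPolynomial σ K} {d : ℕ} (hl : l.IsHomogeneous d) :
    HI (Ideal.span {l}) := HI_span _ (by rintro f rfl; exact ⟨d, hl⟩)

variable {B : Type*}

/-- degree `j` part of a vector -/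
noncomputable def gpF (deg : B → ℕ) (j : ℕ) (f : B →₀ MvPolynomial σ K) : B →₀ MvPolynomial σ K :=
  Finsupp.onFinset f.support (fun b => gp (deg b) j (f b)) fun b hb => by
    rw [Finsupp.mem_support_iff]; rintro h; rw [h] at hb; simp at hb

@[simp] theorem gpF_apply (deg : B → ℕ) (j : ℕ) (f : B →₀ MvPolynomial σ K) (b : B) :
    gpF deg j f b = gp (deg b) j (f b) := rfl

theorem gpF_add (deg : B → ℕ) (j : ℕ) (f g : B →₀ MvPolynomial σ K) :
    gpF deg j (f + g) = gpF deg j f + gpF deg j g := by ext1 b; simp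

theorem gpF_sub (deg : B → ℕ) (j : ℕ) (f g : B →₀ MvPolynomial σ K) :
    gpF deg j (f - g) = gpF deg j f - gpF deg j g := by ext1 b; simp

theorem gpF_zero (deg : B → ℕ) (j : ℕ) :
    gpF deg j (0 : B →₀ MvPolynomial σ K) = 0 := by ext1 b; simp

theorem gpF_gpF (deg : B → ℕ) (j : ℕ) (f : B →₀ MvPolynomial σ K) :
    gpF deg j (gpF deg j f) = gpF deg j f := by ext1 b; simp [gp_gp]

theorem gpF_single (deg : B → ℕ) (j : ℕ) (b : B) (p : MvPolynomial σ K) :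
    gpF deg j (Finsupp.single b p) = Finsupp.single b (gp (deg b) j p) := by
  classical
  ext1 c
  rw [gpF_apply, Finsupp.single_apply, Finsupp.single_apply]
  split_ifs with h
  · rw [h]
  · simp

theorem gpF_smul_lin (deg : B → ℕ) (j : ℕ) {l : MvPolynomial σ K} (hl : l.IsHomogeneous 1)
    (f : B →₀ MvPolynomial σ K) : gpF deg (j + 1) (l • f) = l • gpF deg j f := by
  ext1 c
  rw [gpF_apply, Finsupp.smul_apply, Finsupp.smul_apply, smul_eq_mul, smul_eq_mul, mul_comm,
    gp_mul_hom _ _ _ _ hl, add_comm 1, gp_succ, mul_comm, gpF_apply]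

/-- all coordinates in `L` -/
def InL (L : Ideal (MvPolynomial σ K)) (f : B →₀ MvPolynomial σ K) : Prop := ∀ c, f c ∈ L

theorem InL.add {L : Ideal (MvPolynomial σ K)} {f g : B →₀ MvPolynomial σ K} (hf : InL L f)
    (hg : InL L g) : InL L (f + g) := fun c => Ideal.add_mem _ (hf c) (hg c)
theorem InL.sub {L : Ideal (MvPolynomial σ K)} {f g : B →₀ MvPolynomial σ K} (hf : InL L f)
    (hg : InL L g) : InL L (f - g) := fun c => Ideal.sub_mem _ (hf c) (hg c)
theorem InL.smul {L : Ideal (MvPolynomial σ K)} {f : B →₀ MvPolynomial σ K} (hf : InL L f)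
    (a : MvPolynomial σ K) : InL L (a • f) := fun c => Ideal.mul_mem_left _ _ (hf c)
theorem InL.smul' {L : Ideal (MvPolynomial σ K)} {a : MvPolynomial σ K} (ha : a ∈ L)
    (f : B →₀ MvPolynomial σ K) : InL L (a • f) := fun c => Ideal.mul_mem_right _ _ ha
theorem InL.mono {L L' : Ideal (MvPolynomial σ K)} (h : L ≤ L') {f : B →₀ MvPolynomial σ K}
    (hf : InL L f) : InL L' f := fun c => h (hf c)
theorem InL.gpF {L : Ideal (MvPolynomial σ K)} (hL : HI L) {f : B →₀ MvPolynomial σ K}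
    (hf : InL L f) (deg : B → ℕ) (j : ℕ) : InL L (gpF deg j f) := fun c => hL _ _ _ (hf c)

theorem InL.map {C : Type*} {L : Ideal (MvPolynomial σ K)} {f : B →₀ MvPolynomial σ K}
    (hf : InL L f) (d : (B →₀ MvPolynomial σ K) →ₗ[MvPolynomial σ K] (C →₀ MvPolynomial σ K)) :
    InL L (d f) := by
  intro c
  rw [← Finsupp.sum_single f, map_finsuppSum, Finsupp.sum, Finsupp.finsetSum_apply]
  refine Ideal.sum_mem _ fun b _ => ?_
  have : Finsupp.single b (f b) = f b • Finsupp.single b (1 : MvPolynomial σ K) := by simp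
  rw [this, map_smul, Finsupp.smul_apply]
  exact Ideal.mul_mem_right _ _ (hf b)

theorem InL_map_all {C : Type*} {L : Ideal (MvPolynomial σ K)} (f : B →₀ MvPolynomial σ K)
    (d : (B →₀ MvPolynomial σ K) →ₗ[MvPolynomial σ K] (C →₀ MvPolynomial σ K))
    (hd : ∀ b, InL L (d (Finsupp.single b 1))) : InL L (d f) := by
  intro c
  rw [← Finsupp.sum_single f, map_finsuppSum, Finsupp.sum, Finsupp.finsetSum_apply]
  refine Ideal.sum_mem _ fun b _ => ?_
  have : Finsupp.single b (f b) = f b • Finsupp.single b (1 : MvPolynomial σ K) := by simp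
  rw [this, map_smul, Finsupp.smul_apply]
  exact Ideal.mul_mem_left _ _ (hd b c)

theorem InL_sup [Finite B] {L : Ideal (MvPolynomial σ K)} {l : MvPolynomial σ K}
    {f : B →₀ MvPolynomial σ K} (hf : InL (L ⊔ Ideal.span {l}) f) :
    ∃ u w : B →₀ MvPolynomial σ K, InL L u ∧ f = u + l • w := by
  have h : ∀ c, ∃ u w, u ∈ L ∧ f c = u + l * w := by
    intro c
    obtain ⟨u, hu, v, hv, h⟩ := Submodule.mem_sup.1 (hf c)
    obtain ⟨w, rfl⟩ := Ideal.mem_span_singleton'.1 hv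
    exact ⟨u, w, hu, by rw [← h, mul_comm]⟩
  choose u w hu h using h
  refine ⟨Finsupp.equivFunOnFinite.symm u, Finsupp.equivFunOnFinite.symm w, fun c => hu c, ?_⟩
  ext1 c
  simpa using h c

theorem InL_of_sup {L : Ideal (MvPolynomial σ K)} {l : MvPolynomial σ K}
    {u w : B →₀ MvPolynomial σ K} (hu : InL L u) : InL (L ⊔ Ideal.span {l}) (u + l • w) :=
  (hu.mono le_sup_left).add
    (InL.smul' ((le_sup_right : Ideal.span {l} ≤ L ⊔ _) (Ideal.mem_span_singleton_self l)) w)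

/-- a graded map commutes with taking homogeneous parts -/
theorem map_gpF {C : Type*} {degB : B → ℕ} {degC : C → ℕ}
    (d : (B →₀ MvPolynomial σ K) →ₗ[MvPolynomial σ K] (C →₀ MvPolynomial σ K))
    (hd : ∀ b c, ∀ m ∈ ((d (Finsupp.single b 1)) c).support, mdeg m + degC c = degB b)
    (j : ℕ) (f : B →₀ MvPolynomial σ K) : gpF degC j (d f) = d (gpF degB j f) := by
  induction f using Finsupp.induction_linear with
  | zero => simp [gpF_zero]
  | add f g hf hg => rw [map_add, gpF_add, hf, hg, gpF_add, map_add]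
  | single b p =>
    rw [gpF_single]
    have : ∀ q : MvPolynomial σ K, Finsupp.single b q = q • Finsupp.single b 1 := by simp
    rw [this p, this (gp _ _ _), map_smul, map_smul]
    ext1 c
    rw [gpF_apply, Finsupp.smul_apply, Finsupp.smul_apply, smul_eq_mul, smul_eq_mul,
      gp_mul _ _ _ (hd b c)]

end grading


section crit
variable {K : Type*} [Field K] {σ : Type*} {I : Ideal (MvPolynomial σ K)}
  (F : MinGradedFreeRes K σ I)

/-- cycles modulo `L` -/
def Cyc (L : Ideal (MvPolynomial σ K)) : ∀ i, (F.B i →₀ MvPolynomial σ K) → Prop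
  | 0, _ => True
  | i + 1, f => InL L (F.d i f)

/-- boundaries modulo `L` -/
def Bdy (L : Ideal (MvPolynomial σ K)) (i : ℕ) (f : F.B i →₀ MvPolynomial σ K) : Prop :=
  ∃ g, InL L (f - F.d i g)

/-- `H_i(F/LF)_j = 0` -/
def Van (L : Ideal (MvPolynomial σ K)) (i j : ℕ) : Prop :=
  ∀ f, gpF (F.deg i) j f = f → Cyc F L i f → Bdy F L i f

/-- `H_i(F/LF)_j ≠ 0` -/
def NVan (L : Ideal (MvPolynomial σ K)) (i j : ℕ) : Prop :=
  ∃ f, gpF (F.deg i) j f = f ∧ Cyc F L i f ∧ ¬ Bdy F L i f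

theorem d_gpF (i j : ℕ) (f : F.B (i + 1) →₀ MvPolynomial σ K) :
    gpF (F.deg i) j (F.d i f) = F.d i (gpF (F.deg (i + 1)) j f) :=
  map_gpF (F.d i) (F.homog i) j f

theorem dd (i : ℕ) (g) : F.d i (F.d (i + 1) g) = 0 := by
  have : F.d (i + 1) g ∈ LinearMap.range (F.d (i + 1)) := ⟨g, rfl⟩
  rw [F.exact] at this
  exact this

theorem Bdy.homog {L : Ideal (MvPolynomial σ K)} (hL : HI L) {i j : ℕ}
    {f : F.B i →₀ MvPolynomial σ K} (hf : gpF (F.deg i) j f = f) (h : Bdy F L i f) :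
    ∃ g, gpF (F.deg (i + 1)) j g = g ∧ InL L (f - F.d i g) := by
  obtain ⟨g, hg⟩ := h
  refine ⟨gpF (F.deg (i + 1)) j g, gpF_gpF _ _ _, ?_⟩
  have := hg.gpF hL (F.deg i) j
  rwa [gpF_sub, hf, d_gpF] at this

theorem cyc_of_smul {L : Ideal (MvPolynomial σ K)} {l : MvPolynomial σ K}
    (hl : ∀ f, l * f ∈ L → f ∈ L) (i : ℕ) (f : F.B (i + 1) →₀ MvPolynomial σ K)
    (u w : F.B i →₀ MvPolynomial σ K) (hu : InL L u) (h : F.d i f = u + l • w) : Cyc F L i w := by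
  cases i with
  | zero => trivial
  | succ i =>
    intro c
    apply hl
    have h1 : F.d i (F.d (i + 1) f) = 0 := dd F i f
    rw [h, map_add, map_smul] at h1
    have h2 : l • F.d i w = - F.d i u := by rw [eq_neg_iff_add_eq_zero, add_comm]; exact h1
    have h3 := DFunLike.congr_fun h2 c
    rw [Finsupp.smul_apply, Finsupp.neg_apply, smul_eq_mul] at h3
    rw [h3]
    exact neg_mem (hu.map (F.d i) c)

theorem up_core {L : Ideal (MvPolynomial σ K)} (hL : HI L) {l : MvPolynomial σ K}
    (hl1 : l.IsHomogeneous 1) (i j : ℕ) (hV : Van F L (i + 1) (j + 1))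
    (hW : ∀ (f : F.B (i + 1) →₀ MvPolynomial σ K) (u w : F.B i →₀ MvPolynomial σ K),
      InL L u → F.d i f = u + l • w → gpF (F.deg i) j w = w → Bdy F L i w) :
    Van F (L ⊔ Ideal.span {l}) (i + 1) (j + 1) := by
  intro f hf hc
  have := F.finB i
  obtain ⟨u, w, hu, h⟩ := InL_sup hc
  have h' : F.d i f = gpF (F.deg i) (j + 1) u + l • gpF (F.deg i) j w := by
    rw [← gpF_smul_lin _ _ hl1, ← gpF_add, ← h, d_gpF, hf]
  obtain ⟨g, hg1, hg2⟩ := Bdy.homog F hL (gpF_gpF _ _ _)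
    (hW f _ _ (hu.gpF hL _ _) h' (gpF_gpF _ _ _))
  have hc2 : Cyc F L (i + 1) (f - l • g) := by
    change InL L _
    rw [map_sub, map_smul, h', add_sub_assoc, ← smul_sub]
    exact (hu.gpF hL _ _).add (hg2.smul l)
  have hh2 : gpF (F.deg (i + 1)) (j + 1) (f - l • g) = f - l • g := by
    rw [gpF_sub, gpF_smul_lin _ _ hl1, hf, hg1]
  obtain ⟨g', hg'⟩ := hV _ hh2 hc2
  refine ⟨g', ?_⟩
  have : f - F.d (i + 1) g' = (f - l • g - F.d (i + 1) g') + l • g := by abel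
  rw [this]
  exact InL_of_sup hg'

theorem up_step {L : Ideal (MvPolynomial σ K)} (hL : HI L) {l : MvPolynomial σ K}
    (hl1 : l.IsHomogeneous 1) (hl : ∀ f, l * f ∈ L → f ∈ L) (i j : ℕ)
    (hV : Van F L (i + 1) (j + 1)) (hV' : Van F L i j) :
    Van F (L ⊔ Ideal.span {l}) (i + 1) (j + 1) :=
  up_core F hL hl1 i j hV fun f u w hu h hw => hV' w hw (cyc_of_smul F hl i f u w hu h)

theorem van_zero_mono {L L' : Ideal (MvPolynomial σ K)} (h : L ≤ L') {j : ℕ} (hV : Van F L 0 j) :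
    Van F L' 0 j := fun f hf _ => by
  obtain ⟨g, hg⟩ := hV f hf trivial
  exact ⟨g, hg.mono h⟩

theorem eps_InL {L : Ideal (MvPolynomial σ K)} {f : F.B 0 →₀ MvPolynomial σ K} (hf : InL L f) :
    F.ε f ∈ L := by
  rw [← Finsupp.sum_single f, map_finsuppSum, Finsupp.sum]
  refine Ideal.sum_mem _ fun b _ => ?_
  have : Finsupp.single b (f b) = f b • Finsupp.single b (1 : MvPolynomial σ K) := by simp
  rw [this, map_smul]
  exact Ideal.mul_mem_right _ _ (hf b)

theorem eps_d (g) : F.ε (F.d 0 g) ∈ I := by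
  have : F.d 0 g ∈ LinearMap.range (F.d 0) := ⟨g, rfl⟩
  rw [F.exact0] at this
  exact this

theorem bdy_zero_iff (L : Ideal (MvPolynomial σ K)) (w : F.B 0 →₀ MvPolynomial σ K) :
    Bdy F L 0 w ↔ F.ε w ∈ I ⊔ L := by
  constructor
  · rintro ⟨g, hg⟩
    have : F.ε w = F.ε (F.d 0 g) + F.ε (w - F.d 0 g) := by rw [map_sub]; ring
    rw [this]
    exact Submodule.add_mem_sup (eps_d F g) (eps_InL F hg)
  · intro h
    obtain ⟨a, ha, b, hb, hab⟩ := Submodule.mem_sup.1 h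
    obtain ⟨t, ht⟩ := F.surj 1
    have : w - b • t ∈ LinearMap.range (F.d 0) := by
      rw [F.exact0]
      change F.ε (w - b • t) ∈ I
      rw [map_sub, map_smul, ← hab, smul_eq_mul]
      have : a + b - b * F.ε t = a - b * (F.ε t - 1) := by ring
      rw [this]
      exact Ideal.sub_mem _ ha (Ideal.mul_mem_left _ _ ht)
    obtain ⟨g, hg⟩ := this
    refine ⟨g, ?_⟩
    rw [hg, sub_sub_cancel]
    exact InL.smul' hb t

theorem up_one {L : Ideal (MvPolynomial σ K)} (hL : HI L) {l : MvPolynomial σ K}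
    (hl1 : l.IsHomogeneous 1) (hl : ∀ f, l * f ∈ I ⊔ L → f ∈ I ⊔ L) (j : ℕ)
    (hV : Van F L 1 (j + 1)) : Van F (L ⊔ Ideal.span {l}) 1 (j + 1) :=
  up_core F hL hl1 0 j hV fun f u w hu h _ => by
    rw [bdy_zero_iff]
    apply hl
    have h1 := eps_d F f
    rw [h, map_add, map_smul, smul_eq_mul] at h1
    have : l * F.ε w = (F.ε u + l * F.ε w) + (- F.ε u) := by ring
    rw [this]
    exact Submodule.add_mem_sup h1 (neg_mem (eps_InL F hu))

theorem eps_gpF (j : ℕ) (f : F.B 0 →₀ MvPolynomial σ K) :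
    gp 0 j (F.ε f) = F.ε (gpF (F.deg 0) j f) := by
  induction f using Finsupp.induction_linear with
  | zero => simp [gpF_zero]
  | add f g hf hg => rw [map_add, map_add, hf, hg, gpF_add, map_add]
  | single b p =>
    rw [gpF_single]
    have : ∀ q : MvPolynomial σ K, Finsupp.single b q = q • Finsupp.single b 1 := by simp
    rw [this p, this (gp _ _ _), map_smul F.ε, map_smul F.ε, smul_eq_mul, smul_eq_mul,
      gp_mul_hom _ _ _ _ (F.ε_homog b), add_zero]

theorem low_step {L : Ideal (MvPolynomial σ K)} (hL : HI L) {l : MvPolynomial σ K}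
    (hl1 : l.IsHomogeneous 1) (hl : ∀ f, l * f ∈ L → f ∈ L) (i j : ℕ)
    (hV : Van F L i (j + 1)) (hN : NVan F L i j) :
    NVan F (L ⊔ Ideal.span {l}) (i + 1) (j + 1) := by
  obtain ⟨f, hf, hc, hb⟩ := hN
  have hlf : gpF (F.deg i) (j + 1) (l • f) = l • f := by rw [gpF_smul_lin _ _ hl1, hf]
  have hcl : Cyc F L i (l • f) := by
    cases i with
    | zero => trivial
    | succ i =>
      change InL L _
      rw [map_smul]
      exact InL.smul hc l
  obtain ⟨g, hg1, hg2⟩ := Bdy.homog F hL hlf (hV _ hlf hcl)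
  refine ⟨g, hg1, ?_, ?_⟩
  · change InL _ _
    have : F.d i g = (0 - (l • f - F.d i g)) + l • f := by abel
    rw [this]
    refine InL_of_sup (InL.sub ?_ hg2)
    intro c; simp
  · rintro ⟨h, hh⟩
    have := F.finB (i + 1)
    obtain ⟨u, w, hu, e⟩ := InL_sup hh
    apply hb
    refine ⟨w, fun c => hl _ ?_⟩
    have e1 : F.d i g = F.d i u + l • F.d i w := by
      have := congrArg (F.d i) e
      rwa [map_sub, dd, sub_zero, map_add, map_smul] at this
    have e2 : l • (f - F.d i w) = (l • f - F.d i g) + F.d i u := by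
      rw [e1, smul_sub]; abel
    have e3 := DFunLike.congr_fun e2 c
    rw [Finsupp.smul_apply, smul_eq_mul] at e3
    rw [e3]
    exact (hg2.add (hu.map (F.d i))) c

/-- Main criterion (given existence of a resolution). -/
theorem reg_crit_aux (hI : HI I) (n : ℕ) (l : ℕ → MvPolynomial σ K)
    (L : ℕ → Ideal (MvPolynomial σ K)) (hL0 : L 0 = ⊥)
    (hL : ∀ k, L (k + 1) = L k ⊔ Ideal.span {l k})
    (hl1 : ∀ k, (l k).IsHomogeneous 1)
    (hreg : ∀ k < n + 2, ∀ f, l k * f ∈ L k → f ∈ L k)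
    (hm : ∀ f, f ∈ L (n + 2) ↔ coeff 0 f = 0)
    (h0 : ∀ f, l 0 * f ∈ I → f ∈ I)
    (h1 : ∀ f, l 1 * f ∈ I ⊔ L 1 → f ∈ I ⊔ L 1)
    (h4 : ∀ j, 4 ≤ j → ∀ p : MvPolynomial σ K, p.IsHomogeneous j → p ∈ I ⊔ L 2)
    (h3 : ∃ p : MvPolynomial σ K, p.IsHomogeneous 3 ∧ p ∉ I ⊔ L 2) :
    (∀ i (b : F.B i), F.deg i b ≤ i + 3) ∧ (∃ i, ∃ b : F.B i, F.deg i b = i + 3) := by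
  have hHI : ∀ k, HI (L k) := by
    intro k
    induction k with
    | zero => rw [hL0]; intro a j f hf; rw [Ideal.mem_bot] at hf ⊢; rw [hf, map_zero]
    | succ k ih => rw [hL]; exact HI_sup ih (HI_span_singleton (hl1 k))
  -- stage 0
  have V0 : ∀ i j, Van F (L 0) (i + 1) j := by
    intro i j f _ hc
    have : f ∈ LinearMap.range (F.d (i + 1)) := by
      rw [F.exact, LinearMap.mem_ker]
      ext1 c
      have := hc c
      rw [hL0] at this
      simpa using this
    obtain ⟨g, hg⟩ := this
    exact ⟨g, fun c => by rw [hg]; simp⟩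
  have V1 : ∀ i j, i + 1 + 3 < j → Van F (L 1) (i + 1) j := by
    intro i j hj
    obtain ⟨j, rfl⟩ : ∃ j', j = j' + 1 := ⟨j - 1, by omega⟩
    rw [hL 0]
    cases i with
    | zero => exact up_one F (hHI 0) (hl1 0) (by rw [hL0, sup_bot_eq]; exact h0) j (V0 _ _)
    | succ i => exact up_step F (hHI 0) (hl1 0) (hreg 0 (by omega)) _ _ (V0 _ _) (V0 _ _)
  have V2 : ∀ i j, i + 3 < j → Van F (L 2) i j := by
    intro i j hj
    match i with
    | 0 =>
      intro f hf _
      rw [bdy_zero_iff]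
      refine h4 j (by omega) _ ?_
      rw [← hf, ← eps_gpF]
      exact gp_isHom 0 j j rfl _
    | 1 =>
      obtain ⟨j, rfl⟩ : ∃ j', j = j' + 1 := ⟨j - 1, by omega⟩
      rw [hL 1]
      exact up_one F (hHI 1) (hl1 1) h1 j (V1 _ _ hj)
    | i + 2 =>
      obtain ⟨j, rfl⟩ : ∃ j', j = j' + 1 := ⟨j - 1, by omega⟩
      rw [hL 1]
      exact up_step F (hHI 1) (hl1 1) (hreg 1 (by omega)) _ _ (V1 _ _ hj) (V1 _ _ (by omega))
  have VV : ∀ k ≤ n, ∀ i j, i + 3 < j → Van F (L (k + 2)) i j := by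
    intro k
    induction k with
    | zero => intro _; exact V2
    | succ k ih =>
      intro hk i j hj
      rw [show k + 1 + 2 = (k + 2) + 1 by ring, hL]
      cases i with
      | zero => exact van_zero_mono F le_sup_left (ih (by omega) _ _ hj)
      | succ i =>
        obtain ⟨j, rfl⟩ : ∃ j', j = j' + 1 := ⟨j - 1, by omega⟩
        exact up_step F (hHI _) (hl1 _) (hreg _ (by omega)) _ _ (ih (by omega) _ _ hj)
          (ih (by omega) _ _ (by omega))
  have NN : ∀ k ≤ n, NVan F (L (k + 2)) k (k + 3) := by
    intro k
    induction k with
    | zero =>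
      intro _
      obtain ⟨p, hp, hpI⟩ := h3
      obtain ⟨t, ht⟩ := F.surj p
      refine ⟨gpF (F.deg 0) 3 t, gpF_gpF _ _ _, trivial, ?_⟩
      rw [bdy_zero_iff]
      intro h
      apply hpI
      have e : p = F.ε (gpF (F.deg 0) 3 t) - gp 0 3 (F.ε t - p) := by
        rw [map_sub, eps_gpF, gp_eq_self 0 3 rfl hp]; ring
      rw [e]
      exact Ideal.sub_mem _ h (Ideal.mem_sup_left (hI _ _ _ ht))
    | succ k ih =>
      intro hk
      rw [show k + 1 + 2 = (k + 2) + 1 by ring, hL, show k + 1 + 3 = k + 3 + 1 by ring]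
      exact low_step F (hHI _) (hl1 _) (hreg _ (by omega)) _ _
        (VV k (by omega) _ _ (by omega)) (ih (by omega))
  have hmin : ∀ i g, InL (L (n + 2)) (F.d i g) := by
    intro i g
    refine InL_map_all g (F.d i) fun b c => ?_
    rw [hm]
    exact F.minimal i b c
  constructor
  · intro i b
    by_contra hlt
    push Not at hlt
    have hc : Cyc F (L (n + 2)) i (Finsupp.single b 1) := by
      cases i with
      | zero => trivial
      | succ i => exact hmin i _
    have hh : gpF (F.deg i) (F.deg i b) (Finsupp.single b (1 : MvPolynomial σ K))
        = Finsupp.single b 1 := by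
      rw [gpF_single, gp_eq_self _ _ (zero_add _) (isHomogeneous_one σ K)]
    obtain ⟨g, hg⟩ := VV n le_rfl i _ hlt _ hh hc
    have := (hg.add (hmin i g)) b
    rw [sub_add_cancel, hm] at this
    simp at this
  · obtain ⟨f, hf, _, hb⟩ := NN n le_rfl
    have : ¬ InL (L (n + 2)) f := fun h => hb ⟨0, by simpa using h⟩
    unfold InL at this
    push Not at this
    obtain ⟨b, hb⟩ := this
    refine ⟨n, b, ?_⟩
    rw [hm, ← hf, gpF_apply, coeff_gp] at hb
    by_contra hne
    apply hb
    rw [if_neg]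
    simpa [mdeg] using hne

end crit


section exist
variable {K : Type*} [Field K] {σ : Type*}

theorem gpF_sum_self {B : Type*} (deg : B → ℕ) (f : B →₀ MvPolynomial σ K) :
    ∃ M, f = ∑ j ∈ Finset.range M, gpF deg j f := by
  classical
  refine ⟨(f.support.sup fun b => (f b).support.sup fun m => mdeg m + deg b) + 1, ?_⟩
  ext b m
  rw [Finsupp.finsetSum_apply, coeff_sum]
  simp only [gpF_apply, coeff_gp]
  rw [Finset.sum_ite_eq]
  split_ifs with h
  · rfl
  · by_contra h0
    apply h
    have hm : m ∈ (f b).support := mem_support_iff.2 h0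
    have hb : b ∈ f.support := by
      rw [Finsupp.mem_support_iff]; rintro h1; rw [h1] at h0; simp at h0
    have h1 : mdeg m + deg b ≤ (f b).support.sup fun m => mdeg m + deg b :=
      Finset.le_sup (f := fun m => mdeg m + deg b) hm
    have h2 := Finset.le_sup (f := fun b => (f b).support.sup fun m => mdeg m + deg b) hb
    rw [Finset.mem_range]
    omega

theorem exists_min_gens [Finite σ] {B : Type} [Finite B] (deg : B → ℕ)
    (N : Submodule (MvPolynomial σ K) (B →₀ MvPolynomial σ K))
    (hN : ∀ j f, f ∈ N → gpF deg j f ∈ N) :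
    ∃ (k : ℕ) (deg' : Fin k → ℕ)
      (d : (Fin k →₀ MvPolynomial σ K) →ₗ[MvPolynomial σ K] (B →₀ MvPolynomial σ K)),
      LinearMap.range d = N ∧
      (∀ b c, ∀ m ∈ ((d (Finsupp.single b 1)) c).support, mdeg m + deg c = deg' b) ∧
      ∀ f, d f = 0 → ∀ c, coeff 0 (f c) = 0 := by
  classical
  let P : ℕ → Prop := fun k => ∃ (g : Fin k → (B →₀ MvPolynomial σ K)) (deg' : Fin k → ℕ),
    (∀ b, gpF deg (deg' b) (g b) = g b) ∧ Submodule.span (MvPolynomial σ K) (Set.range g) = N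
  have hex : ∃ k, P k := by
    have h1 : Submodule.span (MvPolynomial σ K) {f | f ∈ N ∧ ∃ j, gpF deg j f = f} = N := by
      apply le_antisymm
      · rw [Submodule.span_le]; exact fun f hf => hf.1
      · intro f hf
        obtain ⟨M, hM⟩ := gpF_sum_self deg f
        rw [hM]
        exact Submodule.sum_mem _ fun j _ => Submodule.subset_span
          ⟨hN j f hf, j, gpF_gpF _ _ _⟩
    have hfg : (Submodule.span (MvPolynomial σ K) {f | f ∈ N ∧ ∃ j, gpF deg j f = f}).FG :=
      IsNoetherian.noetherian _
    rw [Submodule.fg_span_iff_fg_span_finset_subset] at hfg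
    obtain ⟨s, hs1, hs2⟩ := hfg
    have hs3 : ∀ b : Fin s.card, ∃ j, gpF deg j (s.equivFin.symm b : B →₀ MvPolynomial σ K)
        = s.equivFin.symm b := fun b => (hs1 (s.equivFin.symm b).2).2
    choose deg' hdeg' using hs3
    refine ⟨s.card, fun b => s.equivFin.symm b, deg', hdeg', ?_⟩
    rw [← h1, hs2]
    congr 1
    ext f
    constructor
    · rintro ⟨b, rfl⟩; exact (s.equivFin.symm b).2
    · intro hf; exact ⟨s.equivFin ⟨f, hf⟩, by simp⟩
  obtain ⟨g, deg', hg, hspan⟩ := Nat.find_spec hex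
  have hminl := fun m => Nat.find_min hex (m := m)
  generalize Nat.find hex = k at g deg' hg hspan hminl
  have hd : ∀ b c, ∀ m ∈ ((Finsupp.linearCombination (MvPolynomial σ K) g
      (Finsupp.single b 1)) c).support, mdeg m + deg c = deg' b := by
    intro b c m hm
    rw [Finsupp.linearCombination_single, one_smul, mem_support_iff, ← hg b, gpF_apply,
      coeff_gp] at hm
    by_contra h
    exact hm (if_neg h)
  refine ⟨k, deg', Finsupp.linearCombination _ g, ?_, hd, ?_⟩
  · rw [Finsupp.range_linearCombination, hspan]
  · intro f hf c0
    by_contra hne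
    obtain ⟨k, rfl⟩ : ∃ k', k = k' + 1 := ⟨k - 1, by have := c0.pos; omega⟩
    apply hminl k (by omega)
    refine ⟨fun b => g (c0.succAbove b), fun b => deg' (c0.succAbove b), fun b => hg _, ?_⟩
    apply le_antisymm
    · rw [← hspan]
      apply Submodule.span_mono
      rintro _ ⟨b, rfl⟩; exact ⟨_, rfl⟩
    · rw [← hspan, Submodule.span_le]
      have hc0 : g c0 ∈ Submodule.span (MvPolynomial σ K)
          (Set.range fun b => g (c0.succAbove b)) := by
        have h1 := map_gpF _ hd (deg' c0) f
        rw [hf, gpF_zero, Finsupp.linearCombination_apply, Finsupp.sum_fintype _ _ (by simp),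
          Fin.sum_univ_succAbove _ c0] at h1
        have h2 : gpF deg' (deg' c0) f c0 = C (coeff 0 (f c0)) := by
          rw [gpF_apply, gp, if_pos le_rfl, Nat.sub_self, homogeneousComponent_zero]
        rw [h2] at h1
        have h3 : g c0 = - ∑ i, (C (coeff 0 (f c0))⁻¹ * gpF deg' (deg' c0) f (c0.succAbove i)) •
            g (c0.succAbove i) := by
          have h4 := congrArg (fun v => (C (coeff 0 (f c0))⁻¹ : MvPolynomial σ K) • v) h1
          simp only [smul_add, smul_zero, Finset.smul_sum, smul_smul, ← C_mul,
            inv_mul_cancel₀ hne, C_1, one_smul] at h4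
          rw [eq_neg_iff_add_eq_zero]
          exact h4.symm
        rw [h3]
        exact neg_mem (Submodule.sum_mem _ fun i _ => Submodule.smul_mem _ _
          (Submodule.subset_span ⟨i, rfl⟩))
      rintro _ ⟨b, rfl⟩
      rcases Fin.eq_self_or_eq_succAbove c0 b with rfl | ⟨i, rfl⟩
      · exact hc0
      · exact Submodule.subset_span ⟨i, rfl⟩

/-- A stage in the construction of a minimal resolution. -/
structure Stg (K : Type*) [Field K] (σ : Type*) where
  B : Type
  fin : Finite B
  deg : B → ℕ
  N : Submodule (MvPolynomial σ K) (B →₀ MvPolynomial σ K)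
  hN : ∀ j f, f ∈ N → gpF deg j f ∈ N
  hm : ∀ f ∈ N, ∀ c, coeff 0 (f c) = 0

theorem Stg.exists_next [Finite σ] (s : Stg K σ) :
    ∃ (t : Stg K σ) (d : (t.B →₀ MvPolynomial σ K) →ₗ[MvPolynomial σ K] (s.B →₀ MvPolynomial σ K)),
      LinearMap.range d = s.N ∧ t.N = LinearMap.ker d ∧
      (∀ b c, ∀ m ∈ ((d (Finsupp.single b 1)) c).support, mdeg m + s.deg c = t.deg b) := by
  have := s.fin
  obtain ⟨k, deg', d, h1, h2, h3⟩ := exists_min_gens s.deg s.N s.hN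
  refine ⟨⟨Fin k, inferInstance, deg', LinearMap.ker d, ?_, fun f hf => h3 f hf⟩, d, h1, rfl, h2⟩
  intro j f hf
  rw [LinearMap.mem_ker] at hf ⊢
  rw [← map_gpF d h2, hf, gpF_zero]

theorem exists_res [Finite σ] (I : Ideal (MvPolynomial σ K)) (hI : HI I)
    (hI0 : ∀ f ∈ I, coeff 0 f = 0) : Nonempty (MinGradedFreeRes K σ I) := by
  choose nx d h1 h2 h3 using fun s : Stg K σ => s.exists_next
  let e : (Unit →₀ MvPolynomial σ K) →ₗ[MvPolynomial σ K] MvPolynomial σ K := Finsupp.lapply ()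
  let s0 : Stg K σ :=
    { B := Unit, fin := inferInstance, deg := fun _ => 0
      N := Submodule.comap e (I : Submodule _ _)
      hN := fun j f hf => hI 0 j _ hf
      hm := fun f hf c => hI0 _ hf }
  let st : ℕ → Stg K σ := fun i => Nat.rec s0 (fun _ s => nx s) i
  exact ⟨{
    B := fun i => (st i).B
    finB := fun i => (st i).fin
    deg := fun i => (st i).deg
    d := fun i => d (st i)
    ε := e
    ε_homog := fun b => by
      change ((Finsupp.single b (1 : MvPolynomial σ K) : Unit →₀ MvPolynomial σ K) ()).IsHomogeneous 0
      rw [Finsupp.single_apply, if_pos (show (b : Unit) = () from rfl)]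
      exact isHomogeneous_one σ K
    surj := fun s => ⟨Finsupp.single () s, by
      change (Finsupp.single () s : Unit →₀ MvPolynomial σ K) () - s ∈ I
      simp⟩
    exact0 := h1 s0
    exact := fun i => (h1 (st (i + 1))).trans (h2 (st i))
    homog := fun i b c => h3 (st i) b c
    minimal := fun i b c => (st i).hm _ (by rw [← h1 (st i)]; exact ⟨_, rfl⟩) c }⟩

theorem reg_crit [Finite σ] {I : Ideal (MvPolynomial σ K)} (hI : HI I)
    (hI0 : ∀ f ∈ I, coeff 0 f = 0) (n : ℕ) (l : ℕ → MvPolynomial σ K)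
    (L : ℕ → Ideal (MvPolynomial σ K)) (hL0 : L 0 = ⊥)
    (hL : ∀ k, L (k + 1) = L k ⊔ Ideal.span {l k})
    (hl1 : ∀ k, (l k).IsHomogeneous 1)
    (hreg : ∀ k < n + 2, ∀ f, l k * f ∈ L k → f ∈ L k)
    (hm : ∀ f, f ∈ L (n + 2) ↔ coeff 0 f = 0)
    (h0 : ∀ f, l 0 * f ∈ I → f ∈ I)
    (h1 : ∀ f, l 1 * f ∈ I ⊔ L 1 → f ∈ I ⊔ L 1)
    (h4 : ∀ j, 4 ≤ j → ∀ p : MvPolynomial σ K, p.IsHomogeneous j → p ∈ I ⊔ L 2)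
    (h3 : ∃ p : MvPolynomial σ K, p.IsHomogeneous 3 ∧ p ∉ I ⊔ L 2) : RegEq I 3 :=
  ⟨exists_res I hI hI0, fun F =>
    reg_crit_aux F hI n l L hL0 hL hl1 hreg hm h0 h1 h4 h3⟩

end exist


section ideals
variable {K : Type*} [Field K] {σ : Type*}

/-- `l` is a nonzerodivisor modulo `M` -/
def Nzd {R : Type*} [CommRing R] (l : R) (M : Ideal R) : Prop := ∀ f, l * f ∈ M → f ∈ M

/-- setting some variables to zero -/
noncomputable def kill {τ : Type*} (K : Type*) [Field K] (A : Set τ) :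
    MvPolynomial τ K →ₐ[K] MvPolynomial τ K :=
  open Classical in aeval fun a => if a ∈ A then 0 else X a

theorem kill_X_mem {τ : Type*} {A : Set τ} {a : τ} (h : a ∈ A) : kill K A (X a) = 0 := by
  simp [kill, h]

theorem kill_X_not_mem {τ : Type*} {A : Set τ} {a : τ} (h : a ∉ A) : kill K A (X a) = X a := by
  simp [kill, h]

/-- two substitutions agreeing modulo an ideal on the variables -/
theorem sub_mem_of_vars {τ : Type*} {S : Type*} [CommRing S] [Algebra K S] (M : Ideal S)
    (φ ψ : MvPolynomial τ K →ₐ[K] S) (h : ∀ v, φ (X v) - ψ (X v) ∈ M) (f : MvPolynomial τ K) :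
    φ f - ψ f ∈ M := by
  have : (Ideal.Quotient.mkₐ K M).comp φ = (Ideal.Quotient.mkₐ K M).comp ψ := by
    apply MvPolynomial.algHom_ext
    intro v
    exact Ideal.Quotient.eq.2 (h v)
  exact Ideal.Quotient.eq.1 (DFunLike.congr_fun this f)

theorem vars_mem {M : Ideal (MvPolynomial σ K)} (h : ∀ v, X v ∈ M) {f : MvPolynomial σ K}
    (hf : coeff 0 f = 0) : f ∈ M := by
  have := sub_mem_of_vars M (AlgHom.id K _) (aeval fun _ => (0 : MvPolynomial σ K))
    (by simpa using h) f
  rw [aeval_zero'] at this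
  simpa [constantCoeff_eq, hf] using this

theorem linCoord {τ : Type*} (T : Ideal (MvPolynomial σ K))
    (e : MvPolynomial σ K →ₐ[K] MvPolynomial τ K) (s : τ → MvPolynomial σ K)
    (h1 : ∀ t ∈ T, e t = 0) (h2 : ∀ v, aeval s (e (X v)) - X v ∈ T) (h3 : ∀ a, e (s a) = X a)
    (A : Set τ) (f : MvPolynomial σ K) :
    f ∈ T ⊔ Ideal.span (s '' A) ↔ kill K A (e f) = 0 := by
  constructor
  · intro h
    have : T ⊔ Ideal.span (s '' A) ≤ RingHom.ker ((kill K A).comp e) := by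
      refine sup_le ?_ (Ideal.span_le.2 ?_)
      · intro t ht
        rw [RingHom.mem_ker, AlgHom.comp_apply, h1 t ht, map_zero]
      · rintro _ ⟨a, ha, rfl⟩
        rw [SetLike.mem_coe, RingHom.mem_ker, AlgHom.comp_apply, h3, kill_X_mem ha]
    exact this h
  · intro h
    have e1 := sub_mem_of_vars T ((aeval s).comp e) (AlgHom.id K _) (by simpa using h2) f
    have e2 := sub_mem_of_vars (Ideal.span (s '' A)) (aeval s) ((aeval s).comp (kill K A))
      (by
        intro a
        by_cases ha : a ∈ A
        · simp only [AlgHom.comp_apply, kill_X_mem ha, map_zero, sub_zero, aeval_X]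
          exact Ideal.subset_span ⟨a, ha, rfl⟩
        · simp only [AlgHom.comp_apply, kill_X_not_mem ha, sub_self, Submodule.zero_mem]) (e f)
    rw [AlgHom.comp_apply, h, map_zero, sub_zero] at e2
    have : f = -(((aeval s).comp e) f - (AlgHom.id K _) f) + aeval s (e f) := by simp
    rw [this]
    exact Submodule.add_mem_sup (neg_mem e1) e2

theorem linCoord_nzd {τ : Type*} (T : Ideal (MvPolynomial σ K))
    (e : MvPolynomial σ K →ₐ[K] MvPolynomial τ K) (s : τ → MvPolynomial σ K)
    (h1 : ∀ t ∈ T, e t = 0) (h2 : ∀ v, aeval s (e (X v)) - X v ∈ T) (h3 : ∀ a, e (s a) = X a)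
    (A : Set τ) {l : MvPolynomial σ K} (hl : kill K A (e l) ≠ 0) :
    Nzd l (T ⊔ Ideal.span (s '' A)) := by
  intro f hf
  rw [linCoord T e s h1 h2 h3] at hf ⊢
  rw [map_mul, map_mul] at hf
  exact (mul_eq_zero.1 hf).resolve_left hl

/-- exact sequence `0 → S/C → S/I → S/A → 0` -/
structure Tri {R : Type*} [CommRing R] (I : Ideal R) (q : R) (A C : Ideal R) : Prop where
  hA : A = I ⊔ Ideal.span {q}
  hC : ∀ f, q * f ∈ I ↔ f ∈ C

section tri
variable {R : Type*} [CommRing R] {I A C : Ideal R} {q : R}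

theorem mem_sup_singleton {M : Ideal R} {l f : R} :
    f ∈ M ⊔ Ideal.span {l} ↔ ∃ t ∈ M, ∃ a, f = t + l * a := by
  constructor
  · intro h
    obtain ⟨u, hu, v, hv, h⟩ := Submodule.mem_sup.1 h
    obtain ⟨w, rfl⟩ := Ideal.mem_span_singleton'.1 hv
    exact ⟨u, hu, w, by rw [← h, mul_comm]⟩
  · rintro ⟨t, ht, a, rfl⟩
    exact Submodule.add_mem_sup ht (Ideal.mul_mem_right _ _ (Ideal.mem_span_singleton_self l))

theorem Tri.nzd (h : Tri I q A C) {l : R} (hA : Nzd l A) (hC : Nzd l C) : Nzd l I := by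
  intro f hf
  have h1 : f ∈ A := hA f (by rw [h.hA]; exact Ideal.mem_sup_left hf)
  rw [h.hA, mem_sup_singleton] at h1
  obtain ⟨t, ht, a, rfl⟩ := h1
  refine Ideal.add_mem _ ht ((h.hC a).2 (hC a ((h.hC _).1 ?_)))
  have : q * (l * a) = l * (t + q * a) - l * t := by ring
  rw [this]
  exact Ideal.sub_mem _ hf (Ideal.mul_mem_left _ _ ht)

theorem Tri.next (h : Tri I q A C) {l : R} (hA : Nzd l A) :
    Tri (I ⊔ Ideal.span {l}) q (A ⊔ Ideal.span {l}) (C ⊔ Ideal.span {l}) := by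
  refine ⟨by rw [h.hA]; exact sup_right_comm _ _ _, fun f => ?_⟩
  rw [mem_sup_singleton, mem_sup_singleton]
  constructor
  · rintro ⟨g, hg, b, hb⟩
    have h1 : b ∈ A := hA b (by
      rw [h.hA, mem_sup_singleton]
      exact ⟨-g, neg_mem hg, f, by rw [hb]; ring⟩)
    rw [h.hA, mem_sup_singleton] at h1
    obtain ⟨t, ht, a, rfl⟩ := h1
    refine ⟨f - l * a, (h.hC _).1 ?_, a, by ring⟩
    have : q * (f - l * a) = g + l * t := by rw [mul_sub, hb]; ring
    rw [this]
    exact Ideal.add_mem _ hg (Ideal.mul_mem_left _ _ ht)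
  · rintro ⟨t, ht, a, rfl⟩
    exact ⟨q * t, (h.hC t).2 ht, q * a, by ring⟩

theorem nzd_sup {M : Ideal R} {l q0 : R} (h1 : Nzd l M) (h2 : Nzd q0 (M ⊔ Ideal.span {l})) :
    Nzd l (M ⊔ Ideal.span {q0}) := by
  intro f hf
  rw [mem_sup_singleton] at hf
  obtain ⟨t, ht, a, h⟩ := hf
  have h3 := h2 a (by
    rw [mem_sup_singleton]; exact ⟨-t, neg_mem ht, f, by rw [h]; ring⟩)
  rw [mem_sup_singleton] at h3
  obtain ⟨t', ht2, a', rfl⟩ := h3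
  rw [mem_sup_singleton]
  refine ⟨f - q0 * a', h1 _ ?_, a', by ring⟩
  have : l * (f - q0 * a') = t + q0 * t' := by rw [mul_sub, h]; ring
  rw [this]
  exact Ideal.add_mem _ ht (Ideal.mul_mem_left _ _ ht2)

/-- two step regular sequence -/
def RS (l1 l2 : R) (I : Ideal R) : Prop := Nzd l1 I ∧ Nzd l2 (I ⊔ Ideal.span {l1})

theorem Tri.rs (h : Tri I q A C) {l1 l2 : R} (hA : RS l1 l2 A) (hC : RS l1 l2 C) : RS l1 l2 I :=
  ⟨h.nzd hA.1 hC.1, (h.next hA.1).nzd hA.2 hC.2⟩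

theorem Tri.next2 (h : Tri I q A C) {l1 l2 : R} (hA : RS l1 l2 A) :
    Tri (I ⊔ Ideal.span {l1} ⊔ Ideal.span {l2}) q (A ⊔ Ideal.span {l1} ⊔ Ideal.span {l2})
      (C ⊔ Ideal.span {l1} ⊔ Ideal.span {l2}) := (h.next hA.1).next hA.2

theorem le_colon {I : Ideal R} {q : R} {G : Set R} (h : ∀ g ∈ G, q * g ∈ I) {f : R}
    (hf : f ∈ Ideal.span G) : q * f ∈ I := by
  have : Ideal.span G ≤ Submodule.comap (LinearMap.mulLeft R q) I := Ideal.span_le.2 h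
  exact this hf

theorem sup_colon {I : Ideal R} {q : R} {A B : Ideal R} (hA : ∀ f ∈ A, q * f ∈ I)
    (hB : ∀ f ∈ B, q * f ∈ I) : ∀ f ∈ A ⊔ B, q * f ∈ I := by
  have : A ⊔ B ≤ Submodule.comap (LinearMap.mulLeft R q) I := sup_le hA hB
  exact this

end tri

/-- all forms of degree at least `a` lie in `M` -/
def Dbd (M : Ideal (MvPolynomial σ K)) (a : ℕ) : Prop :=
  ∀ j, a ≤ j → ∀ p : MvPolynomial σ K, p.IsHomogeneous j → p ∈ M

theorem hom_decomp {M : Ideal (MvPolynomial σ K)} (hM : HI M) {q : MvPolynomial σ K} {d : ℕ}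
    (hq : q.IsHomogeneous d) {j : ℕ} {p : MvPolynomial σ K} (hp : p.IsHomogeneous (j + d))
    (h : p ∈ M ⊔ Ideal.span {q}) : ∃ t ∈ M, ∃ a, a.IsHomogeneous j ∧ p = t + q * a := by
  obtain ⟨t, ht, a, h⟩ := mem_sup_singleton.1 h
  refine ⟨gp 0 (j + d) t, hM _ _ _ ht, gp d (j + d) a, gp_isHom _ _ _ rfl _, ?_⟩
  have := congrArg (gp 0 (j + d)) h
  rw [gp_eq_self 0 (j + d) rfl hp, map_add, mul_comm, gp_mul_hom _ _ _ _ hq, add_zero, mul_comm] at this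
  exact this

theorem Tri.dbd {I A C : Ideal (MvPolynomial σ K)} {q : MvPolynomial σ K} (h : Tri I q A C)
    (hI : HI I) {d a b m : ℕ} (hq : q.IsHomogeneous d) (hA : Dbd A a) (hC : Dbd C b)
    (h1 : a ≤ m) (h2 : b + d ≤ m) : Dbd I m := by
  intro j hj p hp
  obtain ⟨j, rfl⟩ : ∃ j', j = j' + d := ⟨j - d, by omega⟩
  have := hA _ (by omega) p hp
  rw [h.hA] at this
  obtain ⟨t, ht, a, ha, rfl⟩ := hom_decomp hI hq hp this
  exact Ideal.add_mem _ ht ((h.hC a).2 (hC j (by omega) a ha))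

theorem dbd_one {M : Ideal (MvPolynomial σ K)} (h : ∀ v, X v ∈ M) : Dbd M 1 := by
  intro j hj p hp
  refine vars_mem h (hp.coeff_eq_zero ?_)
  simp; omega

theorem dbd_two {M : Ideal (MvPolynomial σ K)} (hM : HI M) {s q0 : MvPolynomial σ K}
    (hs : s.IsHomogeneous 1) (h : ∀ v, X v ∈ M ⊔ Ideal.span {s})
    (h2 : s * s ∈ M ⊔ Ideal.span {q0}) : Dbd (M ⊔ Ideal.span {q0}) 2 := by
  intro j hj p hp
  obtain ⟨j, rfl⟩ : ∃ j', j = j' + 1 + 1 := ⟨j - 2, by omega⟩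
  obtain ⟨t, ht, a, ha, rfl⟩ := hom_decomp hM hs hp (dbd_one h _ (by omega) p hp)
  obtain ⟨t', ht', a', _, rfl⟩ := hom_decomp hM hs ha (dbd_one h _ (by omega) a ha)
  have : t + s * (t' + s * a') = (t + s * t') + (s * s) * a' := by ring
  rw [this]
  exact Ideal.add_mem _ (Ideal.mem_sup_left (Ideal.add_mem _ ht (Ideal.mul_mem_left _ _ ht')))
    (Ideal.mul_mem_right _ _ h2)

end ideals


section concrete
variable {K : Type*} [Field K] {n : ℕ}

/-- substitution of `x, y, z` -/
noncomputable def sbs {R : Type*} [CommRing R] [Algebra K R] (x0 : R) (y0 : Fin n → R) (z0 : R) :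
    MvPolynomial (Fin (n + 2)) K →ₐ[K] R :=
  aeval (Fin.cons (α := fun _ => R) x0 (Fin.snoc (α := fun _ => R) y0 z0))

section
variable {R : Type*} [CommRing R] [Algebra K R] (x0 : R) (y0 : Fin n → R) (z0 : R)
@[simp] theorem sbs_x : sbs x0 y0 z0 (xP K n) = x0 := by simp [sbs, xP]
@[simp] theorem sbs_z : sbs x0 y0 z0 (zP K n) = z0 := by
  simp only [sbs, zP, aeval_X]
  rw [← Fin.succ_last, Fin.cons_succ, Fin.snoc_last]
@[simp] theorem sbs_y (i : Fin n) : sbs x0 y0 z0 (yP K n i) = y0 i := by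
  simp only [sbs, yP, aeval_X]
  rw [← Fin.succ_castSucc, Fin.cons_succ, Fin.snoc_castSucc]
end

theorem all_vars {Q : MvPolynomial (Fin (n + 2)) K → Prop} (hx : Q (xP K n)) (hz : Q (zP K n))
    (hy : ∀ i, Q (yP K n i)) (v : Fin (n + 2)) : Q (X v) := by
  refine Fin.cases hx (fun w => ?_) v
  refine Fin.lastCases ?_ (fun i => ?_) w
  · rw [Fin.succ_last]; exact hz
  · rw [Fin.succ_castSucc]; exact hy i

theorem hom_x : (xP K n).IsHomogeneous 1 := isHomogeneous_X _ _
theorem hom_z : (zP K n).IsHomogeneous 1 := isHomogeneous_X _ _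
theorem hom_y (i : Fin n) : (yP K n i).IsHomogeneous 1 := isHomogeneous_X _ _

/-- first parameter -/
noncomputable def l1P (K : Type*) [Field K] (n : ℕ) : MvPolynomial (Fin (n + 2)) K :=
  xP K n - zP K n
/-- second parameter -/
noncomputable def l2P (n : ℕ) (γ : K) : MvPolynomial (Fin (n + 2)) K :=
  ∑ i, yP K n i + C γ * zP K n

theorem hom_Cmul {p : MvPolynomial (Fin (n + 2)) K} {d : ℕ} (hp : p.IsHomogeneous d) (r : K) :
    (C r * p).IsHomogeneous d := hp.C_mul r

theorem hom_l1 : (l1P K n).IsHomogeneous 1 := hom_x.sub hom_z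
theorem hom_l2 (γ : K) : (l2P n γ).IsHomogeneous 1 :=
  (IsHomogeneous.sum _ _ _ fun i _ => hom_y i).add (hom_Cmul hom_z γ)

/-- the products `y_i y_j` -/
def yyS (K : Type*) [Field K] (n : ℕ) : Set (MvPolynomial (Fin (n + 2)) K) :=
  {f | ∃ i j : Fin n, i < j ∧ f = yP K n i * yP K n j}

/-- a coordinate plane prime `(w, y_j : j ≠ i)` -/
noncomputable def TT (w : MvPolynomial (Fin (n + 2)) K) (i : Fin n) :
    Ideal (MvPolynomial (Fin (n + 2)) K) :=
  Ideal.span {w} ⊔ Ideal.span {f | ∃ j, j ≠ i ∧ f = yP K n j}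

noncomputable def YY (w : MvPolynomial (Fin (n + 2)) K) (k : ℕ) :
    Ideal (MvPolynomial (Fin (n + 2)) K) :=
  Ideal.span {w} ⊔ Ideal.span (yyS K n) ⊔ Ideal.span {f | ∃ j : Fin n, k ≤ j ∧ f = yP K n j}

theorem y_mem_TT {w : MvPolynomial (Fin (n + 2)) K} {i j : Fin n} (h : j ≠ i) :
    yP K n j ∈ TT w i := Ideal.mem_sup_right (Ideal.subset_span ⟨j, h, rfl⟩)
theorem w_mem_TT {w : MvPolynomial (Fin (n + 2)) K} {i : Fin n} :
    w ∈ TT w i := Ideal.mem_sup_left (Ideal.mem_span_singleton_self w)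

theorem HI_YY {w : MvPolynomial (Fin (n + 2)) K} (hw : w.IsHomogeneous 1) (k : ℕ) :
    HI (YY w k) := by
  refine HI_sup (HI_sup (HI_span_singleton hw) (HI_span _ ?_)) (HI_span _ ?_)
  · rintro f ⟨i, j, _, rfl⟩; exact ⟨_, (hom_y i).mul (hom_y j)⟩
  · rintro f ⟨j, _, rfl⟩; exact ⟨_, hom_y j⟩

theorem YY_one {w : MvPolynomial (Fin (n + 2)) K} (i : Fin n) (hi : (i : ℕ) = 0) :
    YY w 1 = TT w i := by
  apply le_antisymm
  · refine sup_le (sup_le le_sup_left (Ideal.span_le.2 ?_)) (Ideal.span_le.2 ?_)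
    · rintro f ⟨a, b, hab, rfl⟩
      exact Ideal.mul_mem_left _ _ (y_mem_TT (by rintro rfl; rw [Fin.lt_def] at hab; omega))
    · rintro f ⟨j, hj, rfl⟩
      exact y_mem_TT (by rintro rfl; omega)
  · refine sup_le (le_sup_left.trans le_sup_left) (Ideal.span_le.2 ?_)
    rintro f ⟨j, hj, rfl⟩
    refine Ideal.mem_sup_right (Ideal.subset_span ⟨j, ?_, rfl⟩)
    by_contra h
    exact hj (Fin.ext (by omega))

theorem yy_mem {i j : Fin n} (h : i ≠ j) : yP K n i * yP K n j ∈ Ideal.span (yyS K n) := by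
  rcases lt_or_gt_of_ne h with h | h
  · exact Ideal.subset_span ⟨i, j, h, rfl⟩
  · exact Ideal.subset_span ⟨j, i, h, mul_comm _ _⟩

theorem tri_YY {w : MvPolynomial (Fin (n + 2)) K} (k : Fin n) (hk : Nzd (yP K n k) (TT w k)) :
    Tri (YY w (k + 1)) (yP K n k) (YY w k) (TT w k) := by
  refine ⟨?_, fun f => ⟨fun hf => hk f ?_, ?_⟩⟩
  · unfold YY
    rw [sup_assoc _ _ (Ideal.span {yP K n k})]
    congr 1
    rw [← Ideal.span_union]
    congr 1
    ext f
    constructor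
    · rintro ⟨j, hj, rfl⟩
      by_cases h : (k : ℕ) = j
      · right; rw [Fin.ext h]; rfl
      · left; exact ⟨j, by omega, rfl⟩
    · rintro (⟨j, hj, rfl⟩ | h)
      · exact ⟨j, by omega, rfl⟩
      · exact ⟨k, le_rfl, h⟩
  · have : YY w (k + 1) ≤ TT w k := by
      refine sup_le (sup_le le_sup_left (Ideal.span_le.2 ?_)) (Ideal.span_le.2 ?_)
      · rintro f ⟨a, b, hab, rfl⟩
        by_cases h : b = k
        · exact Ideal.mul_mem_right _ _ (y_mem_TT (by rw [← h]; exact hab.ne))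
        · exact Ideal.mul_mem_left _ _ (y_mem_TT h)
      · rintro f ⟨j, hj, rfl⟩
        exact y_mem_TT (by rintro rfl; omega)
    exact this hf
  · refine sup_colon (fun g hg => ?_) (fun g hg => ?_) f
    · exact Ideal.mul_mem_left _ _ (Ideal.mem_sup_left (Ideal.mem_sup_left hg))
    · refine le_colon ?_ hg
      rintro g ⟨j, hj, rfl⟩
      exact Ideal.mem_sup_left (Ideal.mem_sup_right (yy_mem hj.symm))

theorem YY_top (w : MvPolynomial (Fin (n + 2)) K) :
    YY w n = Ideal.span {w} ⊔ Ideal.span (yyS K n) := by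
  unfold YY
  rw [sup_eq_left, Ideal.span_le]
  rintro f ⟨j, hj, rfl⟩
  exact absurd j.2 (by omega)

/-- induction principle along the ideals `YY w k` -/
theorem YY_ind {w : MvPolynomial (Fin (n + 2)) K}
    (hk : ∀ k, Nzd (yP K n k) (TT w k)) (P : Ideal (MvPolynomial (Fin (n + 2)) K) → Prop)
    (hT : ∀ k, P (TT w k))
    (hs : ∀ (k : Fin n), Tri (YY w (k + 1)) (yP K n k) (YY w k) (TT w k) →
      P (YY w k) → P (YY w (k + 1))) (hn : 1 ≤ n) : P (YY w n) := by
  have : ∀ k, k + 1 ≤ n → P (YY w (k + 1)) := by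
    intro k
    induction k with
    | zero => intro h; rw [zero_add, YY_one ⟨0, h⟩ rfl]; exact hT _
    | succ k ih =>
      intro h
      exact hs ⟨k + 1, h⟩ (tri_YY _ (hk _)) (ih (by omega))
  obtain ⟨m, rfl⟩ : ∃ m, n = m + 1 := ⟨n - 1, by omega⟩
  exact this m le_rfl

/-- package of facts about a plane -/
structure Plane (γ : K) (T : Ideal (MvPolynomial (Fin (n + 2)) K)) : Prop where
  rs : RS (l1P K n) (l2P n γ) T
  db : Dbd (T ⊔ Ideal.span {l1P K n} ⊔ Ideal.span {l2P n γ}) 1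

theorem sum_mem_TT {w : MvPolynomial (Fin (n + 2)) K} (i : Fin n) :
    ∑ j, yP K n j - yP K n i ∈ TT w i := by
  classical
  rw [← Finset.sum_erase_eq_sub (Finset.mem_univ i)]
  exact Ideal.sum_mem _ fun j hj => y_mem_TT (Finset.ne_of_mem_erase hj)

theorem plane_of (γ : K) (T : Ideal (MvPolynomial (Fin (n + 2)) K))
    (e : MvPolynomial (Fin (n + 2)) K →ₐ[K] MvPolynomial (Fin 2) K)
    (h1 : ∀ t ∈ T, e t = 0)
    (h2 : ∀ v, aeval ![l1P K n, l2P n γ] (e (X v)) - X v ∈ T)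
    (h3 : ∀ a, e (![l1P K n, l2P n γ] a) = X a)
    (h4 : ∀ v, kill K Set.univ (e (X v)) = 0) :
    Plane γ T ∧ ∀ l, e l ≠ 0 → Nzd l T := by
  have e0 : T = T ⊔ Ideal.span (![l1P K n, l2P n γ] '' ∅) := by simp
  have e1 : T ⊔ Ideal.span {l1P K n} = T ⊔ Ideal.span (![l1P K n, l2P n γ] '' {0}) := by simp
  have e2 : T ⊔ Ideal.span {l1P K n} ⊔ Ideal.span {l2P n γ} =
      T ⊔ Ideal.span (![l1P K n, l2P n γ] '' Set.univ) := by
    rw [sup_assoc, ← Ideal.span_union]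
    congr 2
    ext f
    simp
  have k0 : ∀ f, kill K (∅ : Set (Fin 2)) f = f := by
    intro f
    have : kill K (∅ : Set (Fin 2)) = AlgHom.id K _ := by
      apply MvPolynomial.algHom_ext; intro a; rw [kill_X_not_mem (by simp)]; rfl
    rw [this]; rfl
  have hN : ∀ l, e l ≠ 0 → Nzd l T := by
    intro l hl
    have := linCoord_nzd T e _ h1 h2 h3 ∅ (l := l) (by rw [k0]; exact hl)
    rwa [← e0] at this
  refine ⟨⟨⟨hN _ ?_, ?_⟩, ?_⟩, hN⟩
  · have : e (l1P K n) = X 0 := h3 0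
    rw [this]; exact X_ne_zero _
  · rw [e1]
    apply linCoord_nzd T e _ h1 h2 h3
    have : e (l2P n γ) = X 1 := h3 1
    rw [this, kill_X_not_mem (by simp)]; exact X_ne_zero _
  · apply dbd_one
    intro v
    rw [e2, linCoord T e _ h1 h2 h3]
    exact h4 v

theorem e_TT {w : MvPolynomial (Fin (n + 2)) K} {i : Fin n} {τ : Type*}
    (e : MvPolynomial (Fin (n + 2)) K →ₐ[K] MvPolynomial τ K) (hw : e w = 0)
    (hy : ∀ j, j ≠ i → e (yP K n j) = 0) : ∀ t ∈ TT w i, e t = 0 := by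
  have : TT w i ≤ RingHom.ker e := by
    refine sup_le (Ideal.span_le.2 ?_) (Ideal.span_le.2 ?_)
    · rintro _ rfl; exact hw
    · rintro _ ⟨j, hj, rfl⟩; exact hy j hj
  exact this

theorem plane_x (γ : K) (i : Fin n) :
    Plane γ (TT (xP K n) i) ∧ Nzd (yP K n i) (TT (xP K n) i) ∧ Nzd (zP K n) (TT (xP K n) i) := by
  classical
  let e : MvPolynomial (Fin (n + 2)) K →ₐ[K] MvPolynomial (Fin 2) K :=
    sbs 0 (fun j => if j = i then X 1 + C γ * X 0 else 0) (-X 0)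
  have key := plane_of γ (TT (xP K n) i) e
    (e_TT e (by simp [e]) (by intro j hj; simp [e, hj])) ?_ ?_ ?_
  · refine ⟨key.1, key.2 _ ?_, key.2 _ ?_⟩
    · intro h
      have := congrArg (aeval ![(0 : K), 1]) h
      simp [e] at this
    · simp [e, X_ne_zero]
  · refine all_vars (Q := fun p => aeval ![l1P K n, l2P n γ] (e p) - p ∈ TT (xP K n) i) ?_ ?_ ?_
    · simp only [e, sbs_x, map_zero, zero_sub]
      exact neg_mem w_mem_TT
    · simp only [e, sbs_z, map_neg, aeval_X, Matrix.cons_val_zero, l1P]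
      have : -(xP K n - zP K n) - zP K n = - xP K n := by ring
      rw [this]; exact neg_mem w_mem_TT
    · intro j
      simp only [e, sbs_y]
      split_ifs with h
      · subst h
        simp only [map_add, map_mul, aeval_X, Matrix.cons_val_zero, Matrix.cons_val_one, l1P,
          l2P, algHom_C, algebraMap_eq]
        have : ∑ j, yP K n j + C γ * zP K n + C γ * (xP K n - zP K n) - yP K n j =
          (∑ j, yP K n j - yP K n j) + C γ * xP K n := by ring
        rw [this]
        exact Ideal.add_mem _ (sum_mem_TT j) (Ideal.mul_mem_left _ _ w_mem_TT)
      · rw [map_zero, zero_sub]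
        exact neg_mem (y_mem_TT h)
  · intro a
    fin_cases a
    · simp [e, l1P]
    · simp [e, l2P, algHom_C]
  · refine all_vars (Q := fun p => kill K Set.univ (e p) = 0) ?_ ?_ ?_
    · simp [e]
    · simp [e, kill_X_mem]
    · intro j
      simp only [e, sbs_y]
      split_ifs <;> simp [kill_X_mem]

theorem plane_z (γ : K) (i : Fin n) :
    Plane γ (TT (zP K n) i) ∧ Nzd (yP K n i) (TT (zP K n) i) ∧ Nzd (xP K n) (TT (zP K n) i) := by
  classical
  let e : MvPolynomial (Fin (n + 2)) K →ₐ[K] MvPolynomial (Fin 2) K :=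
    sbs (X 0) (fun j => if j = i then X 1 else 0) 0
  have key := plane_of γ (TT (zP K n) i) e
    (e_TT e (by simp [e]) (by intro j hj; simp [e, hj])) ?_ ?_ ?_
  · refine ⟨key.1, key.2 _ ?_, key.2 _ ?_⟩
    · simp [e, X_ne_zero]
    · simp [e, X_ne_zero]
  · refine all_vars (Q := fun p => aeval ![l1P K n, l2P n γ] (e p) - p ∈ TT (zP K n) i) ?_ ?_ ?_
    · simp only [e, sbs_x, aeval_X, Matrix.cons_val_zero, l1P]
      have : (xP K n - zP K n) - xP K n = - zP K n := by ring
      rw [this]; exact neg_mem w_mem_TT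
    · simp only [e, sbs_z, map_zero, zero_sub]
      exact neg_mem w_mem_TT
    · intro j
      simp only [e, sbs_y]
      split_ifs with h
      · subst h
        simp only [aeval_X, Matrix.cons_val_one, Matrix.cons_val_fin_one, l2P]
        have : ∑ j, yP K n j + C γ * zP K n - yP K n j =
          (∑ j, yP K n j - yP K n j) + C γ * zP K n := by ring
        rw [this]
        exact Ideal.add_mem _ (sum_mem_TT j) (Ideal.mul_mem_left _ _ w_mem_TT)
      · rw [map_zero, zero_sub]
        exact neg_mem (y_mem_TT h)
  · intro a
    fin_cases a
    · simp [e, l1P]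
    · simp [e, l2P, algHom_C]
  · refine all_vars (Q := fun p => kill K Set.univ (e p) = 0) ?_ ?_ ?_
    · simp [e, kill_X_mem]
    · simp [e]
    · intro j
      simp only [e, sbs_y]
      split_ifs <;> simp [kill_X_mem]

theorem YY_good (γ : K) {w : MvPolynomial (Fin (n + 2)) K} (hw : w.IsHomogeneous 1) (hn : 1 ≤ n)
    (hp : ∀ i, Plane γ (TT w i)) (hk : ∀ k, Nzd (yP K n k) (TT w k)) :
    RS (l1P K n) (l2P n γ) (YY w n) ∧
      Dbd (YY w n ⊔ Ideal.span {l1P K n} ⊔ Ideal.span {l2P n γ}) 2 := by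
  refine YY_ind hk (fun J => RS (l1P K n) (l2P n γ) J ∧
      Dbd (J ⊔ Ideal.span {l1P K n} ⊔ Ideal.span {l2P n γ}) 2) (fun k => ⟨(hp k).rs, ?_⟩) ?_ hn
  · intro j hj; exact (hp k).db j (by omega)
  · rintro k ht ⟨h1, h2⟩
    refine ⟨ht.rs h1 (hp k).rs, ?_⟩
    exact (ht.next2 h1).dbd
      (HI_sup (HI_sup (HI_YY hw _) (HI_span_singleton hom_l1)) (HI_span_singleton (hom_l2 γ)))
      (hom_y k) h2 (hp k).db (by omega) (by omega)

/-- the ideal `(xz, y_i y_j)` -/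
noncomputable def JJ (K : Type*) [Field K] (n : ℕ) : Ideal (MvPolynomial (Fin (n + 2)) K) :=
  Ideal.span (yyS K n) ⊔ Ideal.span {xP K n * zP K n}

theorem HI_JJ : HI (JJ K n) := by
  refine HI_sup (HI_span _ ?_) (HI_span_singleton (hom_x.mul hom_z))
  rintro f ⟨i, j, _, rfl⟩; exact ⟨_, (hom_y i).mul (hom_y j)⟩

theorem tri_JJ (hn : 1 ≤ n) : Tri (JJ K n) (xP K n) (YY (xP K n) n) (YY (zP K n) n) := by
  have hnz : Nzd (xP K n) (YY (zP K n) n) :=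
    YY_ind (fun k => (plane_z (0 : K) k).2.1) (fun J => Nzd (xP K n) J)
      (fun k => (plane_z (0 : K) k).2.2)
      (fun k ht h => ht.nzd h (plane_z (0 : K) k).2.2) hn
  refine ⟨?_, fun f => ⟨fun hf => hnz f ?_, ?_⟩⟩
  · rw [YY_top, JJ, sup_assoc, sup_comm]
    congr 1
    symm
    rw [sup_eq_right, Ideal.span_le]
    rintro _ rfl
    exact Ideal.mul_mem_right _ _ (Ideal.mem_span_singleton_self _)
  · have : JJ K n ≤ YY (zP K n) n := by
      rw [YY_top]
      refine sup_le le_sup_right (Ideal.span_le.2 ?_)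
      rintro _ rfl
      exact Ideal.mem_sup_left (Ideal.mul_mem_left _ _ (Ideal.mem_span_singleton_self _))
    exact this hf
  · rw [YY_top]
    refine sup_colon (fun g hg => le_colon ?_ hg) (fun g hg => ?_) f
    · rintro _ rfl
      exact Ideal.mem_sup_right (Ideal.mem_span_singleton_self _)
    · exact Ideal.mul_mem_left _ _ (Ideal.mem_sup_left hg)

theorem JJ_good (γ : K) (hn : 1 ≤ n) : RS (l1P K n) (l2P n γ) (JJ K n) ∧
      Dbd (JJ K n ⊔ Ideal.span {l1P K n} ⊔ Ideal.span {l2P n γ}) 3 := by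
  have hx := YY_good γ hom_x hn (fun i => (plane_x γ i).1) (fun i => (plane_x γ i).2.1)
  have hz := YY_good γ hom_z hn (fun i => (plane_z γ i).1) (fun i => (plane_z γ i).2.1)
  refine ⟨(tri_JJ hn).rs hx.1 hz.1, ?_⟩
  exact ((tri_JJ hn).next2 hx.1).dbd
      (HI_sup (HI_sup HI_JJ (HI_span_singleton hom_l1)) (HI_span_singleton (hom_l2 γ)))
      hom_x hx.2 hz.2 (by omega) (by omega)

end concrete


section quadric
variable {K : Type*} [Field K] {n : ℕ}

/-- coefficients of the `y`-part -/
def cc (p : Fin n) (ε : K) (i : Fin n) : K := if i = p then 1 else ε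

/-- the linear part of the quadric cone -/
noncomputable def TP (p : Fin n) (ε : K) : Ideal (MvPolynomial (Fin (n + 2)) K) :=
  Ideal.span {f | ∃ i, i ≠ p ∧ f = yP K n i - C ε * yP K n p}

/-- the quadric -/
noncomputable def q0P (p : Fin n) (ε : K) : MvPolynomial (Fin (n + 2)) K :=
  yP K n p ^ 2 - C ε * (xP K n * zP K n)

theorem y_sub_mem (p : Fin n) (ε : K) (i : Fin n) :
    yP K n i - C (cc p ε i) * yP K n p ∈ TP p ε := by
  by_cases h : i = p
  · subst h; simp [cc]
  · exact Ideal.subset_span ⟨i, h, by simp [cc, h]⟩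

theorem sum_sub_mem (p : Fin n) (ε : K) :
    ∑ i, yP K n i - C (∑ i, cc p ε i) * yP K n p ∈ TP p ε := by
  rw [map_sum, Finset.sum_mul, ← Finset.sum_sub_distrib]
  exact Ideal.sum_mem _ fun i _ => y_sub_mem p ε i

theorem HI_TP (p : Fin n) (ε : K) : HI (TP p ε) := by
  apply HI_span
  rintro f ⟨i, _, rfl⟩; exact ⟨_, (hom_y i).sub (hom_Cmul (hom_y p) ε)⟩

theorem hom_q0 (p : Fin n) (ε : K) : (q0P p ε).IsHomogeneous 2 :=
  ((hom_y p).pow 2).sub (hom_Cmul (hom_x.mul hom_z) ε)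

theorem e_TP {p : Fin n} {ε : K} {τ : Type*}
    (e : MvPolynomial (Fin (n + 2)) K →ₐ[K] MvPolynomial τ K)
    (hy : ∀ j, e (yP K n j) = C (cc p ε j) * e (yP K n p)) : ∀ t ∈ TP p ε, e t = 0 := by
  have : TP p ε ≤ RingHom.ker e := by
    refine Ideal.span_le.2 ?_
    rintro _ ⟨j, hj, rfl⟩
    rw [SetLike.mem_coe, RingHom.mem_ker, map_sub, map_mul, hy j, algHom_C, algebraMap_eq]
    simp [cc, hj]
  exact this

theorem kill_empty {τ : Type*} (f : MvPolynomial τ K) : kill K (∅ : Set τ) f = f := by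
  have : kill K (∅ : Set τ) = AlgHom.id K _ := by
    apply MvPolynomial.algHom_ext; intro a; rw [kill_X_not_mem (by simp)]; rfl
  rw [this]; rfl

theorem nzd_mul {R : Type*} [CommRing R] {a b : R} {M : Ideal R} (ha : Nzd a M) (hb : Nzd b M) :
    Nzd (a * b) M := fun f hf => hb f (ha _ (by rwa [← mul_assoc]))

theorem nzd_xz (p : Fin n) (ε : K) : Nzd (xP K n * zP K n) (TP p ε ⊔ Ideal.span {q0P p ε}) := by
  let e : MvPolynomial (Fin (n + 2)) K →ₐ[K] MvPolynomial (Fin 3) K :=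
    sbs (X 0) (fun j => C (cc p ε j) * X 2) (X 1)
  let s : Fin 3 → MvPolynomial (Fin (n + 2)) K := ![xP K n, zP K n, yP K n p]
  have hp : cc p ε p = 1 := by simp [cc]
  have h1 : ∀ t ∈ TP p ε, e t = 0 := e_TP e (by intro j; simp [e, hp])
  have h2 : ∀ v, aeval s (e (X v)) - X v ∈ TP p ε := by
    refine all_vars (Q := fun f => aeval s (e f) - f ∈ TP p ε) ?_ ?_ ?_
    · simp [e, s]
    · simp [e, s]
    · intro i
      have := neg_mem (y_sub_mem p ε i)
      rw [neg_sub] at this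
      simpa [e, s, algHom_C] using this
  have h3 : ∀ a, e (s a) = X a := by
    intro a
    fin_cases a <;> simp [e, s, hp]
  have e0 : TP p ε = TP p ε ⊔ Ideal.span (s '' ∅) := by simp
  have e1 : TP p ε ⊔ Ideal.span {xP K n} = TP p ε ⊔ Ideal.span (s '' {0}) := by simp [s]
  have e2 : TP p ε ⊔ Ideal.span {zP K n} = TP p ε ⊔ Ideal.span (s '' {1}) := by simp [s]
  have hq : e (q0P p ε) = X 2 ^ 2 - C ε * (X 0 * X 1) := by simp [e, q0P, hp, algHom_C]
  apply nzd_mul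
  · apply nzd_sup
    · rw [e0]
      apply linCoord_nzd _ e s h1 h2 h3
      simp [e, kill_empty, X_ne_zero]
    · rw [e1]
      apply linCoord_nzd _ e s h1 h2 h3
      simp [hq, kill_X_mem, kill_X_not_mem, X_ne_zero]
  · apply nzd_sup
    · rw [e0]
      apply linCoord_nzd _ e s h1 h2 h3
      simp [e, kill_empty, X_ne_zero]
    · rw [e2]
      apply linCoord_nzd _ e s h1 h2 h3
      simp [hq, kill_X_mem, kill_X_not_mem, X_ne_zero]

/-- the socle representative -/
noncomputable def s2P (p : Fin n) (a b : K) : MvPolynomial (Fin (n + 2)) K :=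
  C a * yP K n p - C b * zP K n

theorem hom_s2 (p : Fin n) (a b : K) : (s2P p a b).IsHomogeneous 1 :=
  (hom_Cmul (hom_y p) a).sub (hom_Cmul hom_z b)

theorem PP_good (p : Fin n) (ε γ a b : K) (hab : γ * a + (∑ i, cc p ε i) * b = 1)
    (hκ : γ ^ 2 - ε * (∑ i, cc p ε i) ^ 2 ≠ 0) :
    RS (l1P K n) (l2P n γ) (TP p ε ⊔ Ideal.span {q0P p ε}) ∧
    Dbd (TP p ε ⊔ Ideal.span {q0P p ε} ⊔ Ideal.span {l1P K n} ⊔ Ideal.span {l2P n γ}) 2 ∧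
    s2P p a b ∉
      TP p ε ⊔ Ideal.span {q0P p ε} ⊔ Ideal.span {l1P K n} ⊔ Ideal.span {l2P n γ} := by
  set c := ∑ i, cc p ε i with hc
  let Ye : MvPolynomial (Fin 3) K := C b * X 1 + C γ * X 2
  let Ze : MvPolynomial (Fin 3) K := C a * X 1 - C c * X 2
  let e : MvPolynomial (Fin (n + 2)) K →ₐ[K] MvPolynomial (Fin 3) K :=
    sbs (X 0 + Ze) (fun j => C (cc p ε j) * Ye) Ze
  let s : Fin 3 → MvPolynomial (Fin (n + 2)) K := ![l1P K n, l2P n γ, s2P p a b]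
  have hp : cc p ε p = 1 := by simp [cc]
  have habC (τ : Type _) : (C γ * C a + C c * C b : MvPolynomial τ K) = 1 := by
    rw [← C_mul, ← C_mul, ← C_add, hab, C_1]
  have s0 : s 0 = l1P K n := rfl
  have s1 : s 1 = l2P n γ := rfl
  have s2 : s 2 = s2P p a b := rfl
  have ex : e (xP K n) = X 0 + Ze := by simp [e]
  have ez : e (zP K n) = Ze := by simp [e]
  have ey (i) : e (yP K n i) = C (cc p ε i) * Ye := by simp [e]
  have eyp : e (yP K n p) = Ye := by simp [e, hp]
  have h1 : ∀ t ∈ TP p ε, e t = 0 := e_TP e (by intro j; rw [ey, eyp])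
  have hS := sum_sub_mem p ε
  rw [← hc] at hS
  have hZ : aeval s Ze - zP K n ∈ TP p ε := by
    have : aeval s Ze - zP K n = C a * (∑ i, yP K n i - C c * yP K n p) := by
      simp only [Ze, map_sub, map_mul, aeval_X, s1, s2, algHom_C, algebraMap_eq, l2P, s2P]
      linear_combination zP K n * habC _
    rw [this]; exact Ideal.mul_mem_left _ _ hS
  have hY : aeval s Ye - yP K n p ∈ TP p ε := by
    have : aeval s Ye - yP K n p = C b * (∑ i, yP K n i - C c * yP K n p) := by
      simp only [Ye, map_add, map_mul, aeval_X, s1, s2, algHom_C, algebraMap_eq, l2P, s2P]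
      linear_combination yP K n p * habC _
    rw [this]; exact Ideal.mul_mem_left _ _ hS
  have h2 : ∀ v, aeval s (e (X v)) - X v ∈ TP p ε := by
    refine all_vars (Q := fun f => aeval s (e f) - f ∈ TP p ε) ?_ ?_ ?_
    · have : aeval s (e (xP K n)) - xP K n = aeval s Ze - zP K n := by
        rw [ex, map_add, aeval_X, s0, l1P]; ring
      rw [this]; exact hZ
    · rw [ez]; exact hZ
    · intro i
      have : aeval s (e (yP K n i)) - yP K n i = C (cc p ε i) * (aeval s Ye - yP K n p)
          - (yP K n i - C (cc p ε i) * yP K n p) := by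
        rw [ey, map_mul, algHom_C, algebraMap_eq]; ring
      rw [this]
      exact Ideal.sub_mem _ (Ideal.mul_mem_left _ _ hY) (y_sub_mem p ε i)
  have h3 : ∀ a, e (s a) = X a := by
    have t0 : e (s 0) = X 0 := by rw [s0, l1P, map_sub, ex, ez]; ring
    have t1 : e (s 1) = X 1 := by
      rw [s1, l2P, map_add, map_sum, map_mul, ez, algHom_C, algebraMap_eq]
      simp only [ey]
      rw [← Finset.sum_mul, ← map_sum, ← hc]
      linear_combination X 1 * habC _
    have t2 : e (s 2) = X 2 := by
      rw [s2, s2P, map_sub, map_mul, map_mul, ez, eyp, algHom_C, algHom_C, algebraMap_eq]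
      linear_combination X 2 * habC _
    intro a
    fin_cases a
    exacts [t0, t1, t2]
  have e0 : TP p ε = TP p ε ⊔ Ideal.span (s '' ∅) := by simp
  have e1 : TP p ε ⊔ Ideal.span {l1P K n} = TP p ε ⊔ Ideal.span (s '' {0}) := by simp [s0]
  have e2 : TP p ε ⊔ Ideal.span {l1P K n} ⊔ Ideal.span {l2P n γ} =
      TP p ε ⊔ Ideal.span (s '' {0, 1}) := by
    rw [sup_assoc, ← Ideal.span_union, Set.image_pair, s0, s1]
    rfl
  have e3 : TP p ε ⊔ Ideal.span {l1P K n} ⊔ Ideal.span {l2P n γ} ⊔ Ideal.span {s2P p a b} =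
      TP p ε ⊔ Ideal.span (s '' Set.univ) := by
    rw [e2, sup_assoc, ← Ideal.span_union]
    congr 2
    have hs2 : ({s2P p a b} : Set (MvPolynomial (Fin (n + 2)) K)) = s '' {2} := by
      rw [Set.image_singleton, s2]
    rw [hs2, ← Set.image_union]
    congr 1
    ext i; fin_cases i <;> simp
  have hq : e (q0P p ε) = Ye ^ 2 - C ε * ((X 0 + Ze) * Ze) := by
    rw [q0P, map_sub, map_pow, eyp, map_mul, map_mul, ex, ez, algHom_C, algebraMap_eq]
  have hq2 : kill K {0, 1} (e (q0P p ε)) = C (γ ^ 2 - ε * c ^ 2) * X 2 ^ 2 := by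
    rw [hq]
    simp only [Ye, Ze, map_add, map_sub, map_mul, map_pow, algHom_C, algebraMap_eq]
    have k0 : kill K ({0, 1} : Set (Fin 3)) (X 0) = 0 := kill_X_mem (by simp)
    have k1 : kill K ({0, 1} : Set (Fin 3)) (X 1) = 0 := kill_X_mem (by simp)
    have k2 : kill K ({0, 1} : Set (Fin 3)) (X 2) = X 2 := kill_X_not_mem (by simp)
    rw [k0, k1, k2]
    ring
  have hq2ne : kill K {0, 1} (e (q0P p ε)) ≠ 0 := by
    rw [hq2]
    exact mul_ne_zero (by rwa [Ne, C_eq_zero]) (pow_ne_zero _ (X_ne_zero _))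
  have hq1ne : kill K {0} (e (q0P p ε)) ≠ 0 := by
    intro h
    apply hq2ne
    have h' := (linCoord _ e s h1 h2 h3 {0} _).2 h
    refine (linCoord _ e s h1 h2 h3 {0, 1} _).1 ?_
    rw [← e2]; rw [← e1] at h'
    exact Ideal.mem_sup_left h'
  have nq1 : Nzd (q0P p ε) (TP p ε ⊔ Ideal.span {l1P K n}) := by
    rw [e1]; exact linCoord_nzd _ e s h1 h2 h3 _ hq1ne
  have nq2 : Nzd (q0P p ε) (TP p ε ⊔ Ideal.span {l1P K n} ⊔ Ideal.span {l2P n γ}) := by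
    rw [e2]; exact linCoord_nzd _ e s h1 h2 h3 _ hq2ne
  have n1 : Nzd (l1P K n) (TP p ε) := by
    rw [e0]; apply linCoord_nzd _ e s h1 h2 h3
    rw [← s0, h3, kill_empty]; exact X_ne_zero _
  have n2 : Nzd (l2P n γ) (TP p ε ⊔ Ideal.span {l1P K n}) := by
    rw [e1]; apply linCoord_nzd _ e s h1 h2 h3
    rw [← s1, h3, kill_X_not_mem (by simp)]; exact X_ne_zero _
  have eq1 : TP p ε ⊔ Ideal.span {q0P p ε} ⊔ Ideal.span {l1P K n} =
      TP p ε ⊔ Ideal.span {l1P K n} ⊔ Ideal.span {q0P p ε} := sup_right_comm _ _ _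
  have eq2 : TP p ε ⊔ Ideal.span {q0P p ε} ⊔ Ideal.span {l1P K n} ⊔ Ideal.span {l2P n γ} =
      TP p ε ⊔ Ideal.span {l1P K n} ⊔ Ideal.span {l2P n γ} ⊔ Ideal.span {q0P p ε} := by
    rw [eq1]; exact sup_right_comm _ _ _
  refine ⟨⟨nzd_sup n1 nq1, ?_⟩, ?_, ?_⟩
  · rw [eq1]; exact nzd_sup n2 nq2
  · rw [eq2]
    refine dbd_two (HI_sup (HI_sup (HI_TP p ε) (HI_span_singleton hom_l1))
      (HI_span_singleton (hom_l2 γ))) (hom_s2 p a b) ?_ ?_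
    · intro v
      rw [e3, linCoord _ e s h1 h2 h3]
      have : kill K (Set.univ : Set (Fin 3)) = aeval fun _ => 0 := by
        apply MvPolynomial.algHom_ext; intro a; rw [kill_X_mem (by simp)]; simp
      rw [this]
      refine all_vars (Q := fun f => aeval (fun _ => (0 : MvPolynomial (Fin 3) K)) (e f) = 0)
        ?_ ?_ ?_ v
      · simp [ex, Ze]
      · simp [ez, Ze]
      · intro i; simp [ey, Ye]
    · rw [mem_sup_singleton]
      refine ⟨s2P p a b * s2P p a b - q0P p ε * C (γ ^ 2 - ε * c ^ 2)⁻¹, ?_,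
        C (γ ^ 2 - ε * c ^ 2)⁻¹, by ring⟩
      rw [e2, linCoord _ e s h1 h2 h3, map_sub, map_sub, map_mul, map_mul, map_mul, map_mul, hq2,
        ← s2, h3, kill_X_not_mem (by simp), algHom_C, algebraMap_eq, algHom_C, algebraMap_eq]
      have : (C (γ ^ 2 - ε * c ^ 2) * C (γ ^ 2 - ε * c ^ 2)⁻¹ : MvPolynomial (Fin 3) K) = 1 := by
        rw [← C_mul, mul_inv_cancel₀ hκ, C_1]
      linear_combination (- X 2 ^ 2) * this
  · rw [eq2, mem_sup_singleton]
    rintro ⟨t, ht, g, h⟩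
    rw [e2, linCoord _ e s h1 h2 h3] at ht
    have h' := congrArg (fun f => kill K {0, 1} (e f)) h
    simp only [map_add, map_mul] at h'
    rw [ht, hq2, ← s2, h3, kill_X_not_mem (by simp), zero_add] at h'
    have h5 : (X 2 : MvPolynomial (Fin 3) K) * 1 =
      X 2 * (C (γ ^ 2 - ε * c ^ 2) * X 2 * kill K {0, 1} (e g)) := by
      linear_combination h'
    have h6 := mul_left_cancel₀ (X_ne_zero _) h5
    have := congrArg (aeval (fun _ : Fin 3 => (0 : K))) h6
    simp at this

end quadric


section chain
variable {K : Type*} [Field K] {n : ℕ}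

theorem sum_ite_ne {M : Type*} [AddCommGroup M] (f : Fin n → M) (p : Fin n) :
    ∑ k, (if k = p then 0 else f k) = ∑ k, f k - f p := by
  have h : f p = ∑ k, (if k = p then f k else 0) := by simp
  rw [eq_sub_iff_add_eq, h, ← Finset.sum_add_distrib]
  refine Finset.sum_congr rfl fun k _ => ?_
  split_ifs <;> simp

/-- a full linear system of parameters of the polynomial ring -/
noncomputable def lcP (p : Fin n) (γ : K) : Fin (n + 2) → MvPolynomial (Fin (n + 2)) K :=
  Fin.cons (α := fun _ => MvPolynomial (Fin (n + 2)) K) (l1P K n)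
    (Fin.cons (α := fun _ => MvPolynomial (Fin (n + 2)) K) (l2P n γ)
      (fun k => if k = p then zP K n else yP K n k))

theorem lc_zero (p : Fin n) (γ : K) : lcP p γ 0 = l1P K n := rfl
theorem lc_one (p : Fin n) (γ : K) : lcP p γ (Fin.succ 0) = l2P n γ := rfl
theorem lc_succ (p : Fin n) (γ : K) (k : Fin n) :
    lcP p γ k.succ.succ = if k = p then zP K n else yP K n k := rfl

theorem fin_two_cases {Q : Fin (n + 2) → Prop} (h0 : Q 0) (h1 : Q (Fin.succ 0))
    (h2 : ∀ k : Fin n, Q k.succ.succ) (i : Fin (n + 2)) : Q i := by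
  refine Fin.cases h0 (fun w => ?_) i
  exact Fin.cases h1 (fun k => h2 k) w

theorem hom_lc (p : Fin n) (γ : K) (i) : (lcP p γ i).IsHomogeneous 1 := by
  refine fin_two_cases (Q := fun i => (lcP p γ i).IsHomogeneous 1) ?_ ?_ ?_ i
  · exact hom_l1
  · exact hom_l2 γ
  · intro k
    rw [lc_succ]
    split_ifs
    exacts [hom_z, hom_y k]

theorem lc_coord (p : Fin n) (γ : K) :
    ∃ e : MvPolynomial (Fin (n + 2)) K →ₐ[K] MvPolynomial (Fin (n + 2)) K,
      (∀ v, aeval (lcP p γ) (e (X v)) - X v ∈ (⊥ : Ideal (MvPolynomial (Fin (n + 2)) K))) ∧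
      ∀ a, e (lcP p γ a) = X a := by
  let W : Fin n → MvPolynomial (Fin (n + 2)) K := fun k => X k.succ.succ
  let A : MvPolynomial (Fin (n + 2)) K :=
    X (Fin.succ 0) - C γ * W p - ∑ k, (if k = p then 0 else W k)
  let e : MvPolynomial (Fin (n + 2)) K →ₐ[K] MvPolynomial (Fin (n + 2)) K :=
    sbs (X 0 + W p) (fun k => if k = p then A else W k) (W p)
  have ex : e (xP K n) = X 0 + W p := by simp [e]
  have ez : e (zP K n) = W p := by simp [e]
  have ey (k) : e (yP K n k) = if k = p then A else W k := by simp [e]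
  have aW (k) : aeval (lcP p γ) (W k) = if k = p then zP K n else yP K n k := by
    simp only [W, aeval_X, lc_succ]
  have aWp : aeval (lcP p γ) (W p) = zP K n := by rw [aW, if_pos rfl]
  refine ⟨e, ?_, ?_⟩
  · refine all_vars (Q := fun f => aeval (lcP p γ) (e f) - f ∈
      (⊥ : Ideal (MvPolynomial (Fin (n + 2)) K))) ?_ ?_ ?_
    · rw [ex, map_add, aWp, aeval_X, lc_zero, l1P, Ideal.mem_bot]; ring
    · rw [ez, aWp, Ideal.mem_bot]; ring
    · intro k
      rw [ey, Ideal.mem_bot]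
      split_ifs with h
      · subst h
        have : aeval (lcP k γ) (∑ j, (if j = k then 0 else W j)) =
            ∑ j, (if j = k then 0 else yP K n j) := by
          rw [map_sum]
          refine Finset.sum_congr rfl fun j _ => ?_
          split_ifs with hj
          · simp
          · rw [aW, if_neg hj]
        simp only [A]
        rw [map_sub, map_sub, this, map_mul, aWp, aeval_X, lc_one, l2P, algHom_C, algebraMap_eq,
          sum_ite_ne]
        ring
      · rw [aW, if_neg h, sub_self]
  · refine fin_two_cases ?_ ?_ ?_
    · rw [lc_zero, l1P, map_sub, ex, ez]; ring
    · rw [lc_one, l2P, map_add, map_sum, map_mul, ez, algHom_C, algebraMap_eq]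
      have : ∑ k, e (yP K n k) = A + ∑ k, (if k = p then 0 else W k) := by
        have hA : ∑ k, (if k = p then A else 0) = A := by simp
        conv_rhs => rw [← hA]
        rw [← Finset.sum_add_distrib]
        refine Finset.sum_congr rfl fun k _ => ?_
        rw [ey]
        split_ifs <;> simp
      rw [this]
      simp only [A]
      ring
    · intro k
      rw [lc_succ]
      split_ifs with h
      · rw [ez, h]
      · rw [ey, if_neg h]

theorem coeff_zero_of_hom {f : MvPolynomial (Fin (n + 2)) K} {d : ℕ} (hf : f.IsHomogeneous d)
    (hd : d ≠ 0) : coeff 0 f = 0 := by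
  refine hf.coeff_eq_zero ?_
  simp only [map_zero]
  exact hd.symm

theorem span_coeff_zero {s : Set (MvPolynomial (Fin (n + 2)) K)} (hs : ∀ f ∈ s, coeff 0 f = 0)
    {f} (hf : f ∈ Ideal.span s) : coeff 0 f = 0 := by
  have : Ideal.span s ≤ RingHom.ker (constantCoeff (R := K) (σ := Fin (n + 2))) :=
    Ideal.span_le.2 hs
  exact this hf

theorem JJ_coeff {f} (hf : f ∈ JJ K n) : coeff 0 f = 0 := by
  rw [JJ, ← Ideal.span_union] at hf
  refine span_coeff_zero ?_ hf
  rintro g (⟨i, j, _, rfl⟩ | rfl)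
  · exact coeff_zero_of_hom ((hom_y i).mul (hom_y j)) (by omega)
  · exact coeff_zero_of_hom (hom_x.mul hom_z) (by omega)

theorem reg_of (p : Fin n) (ε γ a b : K) (hab : γ * a + (∑ i, cc p ε i) * b = 1)
    (hκ : γ ^ 2 - ε * (∑ i, cc p ε i) ^ 2 ≠ 0) {I : Ideal (MvPolynomial (Fin (n + 2)) K)}
    (hI : HI I) (hIJ : JJ K n = I ⊔ Ideal.span {xP K n * zP K n})
    (hIP : I ≤ TP p ε ⊔ Ideal.span {q0P p ε})
    (hT : ∀ i, i ≠ p → xP K n * zP K n * (yP K n i - C ε * yP K n p) ∈ I)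
    (hq : xP K n * zP K n * q0P p ε ∈ I) : RegEq I 3 := by
  have hn : 1 ≤ n := by have := p.2; omega
  obtain ⟨J1, J2⟩ := JJ_good γ hn
  obtain ⟨P1, P2, P3⟩ := PP_good p ε γ a b hab hκ
  have tri : Tri I (xP K n * zP K n) (JJ K n) (TP p ε ⊔ Ideal.span {q0P p ε}) := by
    refine ⟨hIJ, fun f => ⟨fun hf => nzd_xz p ε f (hIP hf), ?_⟩⟩
    refine sup_colon (fun g hg => le_colon ?_ hg) (fun g hg => le_colon ?_ hg) f
    · rintro _ ⟨i, hi, rfl⟩; exact hT i hi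
    · rintro _ rfl; exact hq
  have rs := tri.rs J1 P1
  have tri2 := tri.next2 J1
  have hd := tri2.dbd (m := 4)
      (HI_sup (HI_sup hI (HI_span_singleton hom_l1)) (HI_span_singleton (hom_l2 γ)))
      (hom_x.mul hom_z) J2 P2 (by omega) (by omega)
  obtain ⟨e, h2, h3⟩ := lc_coord p γ
  let l : ℕ → MvPolynomial (Fin (n + 2)) K := fun k =>
    if h : k < n + 2 then lcP p γ ⟨k, h⟩ else 0
  let L : ℕ → Ideal (MvPolynomial (Fin (n + 2)) K) := fun k =>
    Ideal.span (lcP p γ '' {i | i.val < k})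
  have hl (k) (h : k < n + 2) : l k = lcP p γ ⟨k, h⟩ := dif_pos h
  have l0 : l 0 = l1P K n := (hl 0 (by omega)).trans (lc_zero p γ)
  have l1 : l 1 = l2P n γ := (hl 1 (by omega)).trans (lc_one p γ)
  have hL0 : L 0 = ⊥ := by simp [L]
  have hL : ∀ k, L (k + 1) = L k ⊔ Ideal.span {l k} := by
    intro k
    by_cases h : k < n + 2
    · simp only [L]
      rw [hl k h, ← Ideal.span_union, ← Set.image_singleton, ← Set.image_union]
      congr 2
      ext i
      simp only [Set.mem_ofPred_eq, Set.mem_union, Set.mem_singleton_iff, Fin.ext_iff]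
      omega
    · have : l k = 0 := dif_neg h
      rw [this]
      simp only [Ideal.span_singleton_zero, sup_bot_eq, L]
      congr 2
      ext i
      simp only [Set.mem_ofPred_eq]
      omega
  have L1 : L 1 = Ideal.span {l1P K n} := by rw [hL 0, hL0, l0, bot_sup_eq]
  have L2 : L 2 = Ideal.span {l1P K n} ⊔ Ideal.span {l2P n γ} := by rw [hL 1, L1, l1]
  have hL2 : I ⊔ L 2 = I ⊔ Ideal.span {l1P K n} ⊔ Ideal.span {l2P n γ} := by
    rw [L2, sup_assoc]
  have h1 : ∀ t ∈ (⊥ : Ideal (MvPolynomial (Fin (n + 2)) K)), e t = 0 := by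
    intro t ht
    rw [Ideal.mem_bot.1 ht, map_zero]
  refine reg_crit hI (fun f hf => JJ_coeff ?_) n l L hL0 hL ?_ ?_ ?_ ?_ ?_ ?_ ?_
  · rw [hIJ]; exact Ideal.mem_sup_left hf
  · intro k
    simp only [l]
    split_ifs
    · exact hom_lc _ _ _
    · exact isHomogeneous_zero _ _ _
  · intro k hk
    have := linCoord_nzd ⊥ e _ h1 h2 h3 {i | i.val < k} (l := l k) (by
      rw [hl k hk, h3, kill_X_not_mem (by simp)]; exact X_ne_zero _)
    rw [bot_sup_eq] at this
    exact this
  · intro f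
    constructor
    · intro hf
      refine span_coeff_zero ?_ hf
      rintro _ ⟨i, _, rfl⟩
      exact coeff_zero_of_hom (hom_lc p γ i) (by omega)
    · intro hf
      have := linCoord ⊥ e _ h1 h2 h3 {i | i.val < n + 2} f
      rw [bot_sup_eq] at this
      refine this.2 ?_
      have hh := linCoord ⊥ e _ h1 h2 h3 {i | i.val < n + 2} f
      have hv : ∀ v, X v ∈ (⊥ : Ideal (MvPolynomial (Fin (n + 2)) K)) ⊔
          Ideal.span (lcP p γ '' {i | i.val < n + 2}) := by
        intro v
        have m (i) : lcP p γ i ∈ (⊥ : Ideal (MvPolynomial (Fin (n + 2)) K)) ⊔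
          Ideal.span (lcP p γ '' {i | i.val < n + 2}) :=
          Ideal.mem_sup_right (Ideal.subset_span ⟨i, i.2, rfl⟩)
        have mz : zP K n ∈ (⊥ : Ideal (MvPolynomial (Fin (n + 2)) K)) ⊔
          Ideal.span (lcP p γ '' {i | i.val < n + 2}) := by
          have := m p.succ.succ
          rwa [lc_succ, if_pos rfl] at this
        have my (k) (hk : k ≠ p) : yP K n k ∈ (⊥ : Ideal (MvPolynomial (Fin (n + 2)) K)) ⊔
          Ideal.span (lcP p γ '' {i | i.val < n + 2}) := by
          have := m k.succ.succ
          rwa [lc_succ, if_neg hk] at this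
        refine all_vars (Q := fun f => f ∈ (⊥ : Ideal (MvPolynomial (Fin (n + 2)) K)) ⊔
          Ideal.span (lcP p γ '' {i | i.val < n + 2})) ?_ mz ?_ v
        · have := Ideal.add_mem _ (m 0) mz
          rwa [lc_zero, l1P, sub_add_cancel] at this
        · intro k
          by_cases hk : k = p
          · subst hk
            have h5 := m (Fin.succ 0)
            have h6 : ∑ j, (if j = k then 0 else yP K n j) ∈
                (⊥ : Ideal (MvPolynomial (Fin (n + 2)) K)) ⊔
                Ideal.span (lcP k γ '' {i | i.val < n + 2}) := by
              refine Ideal.sum_mem _ fun j _ => ?_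
              split_ifs with hj
              · exact zero_mem _
              · exact my j hj
            have h7 := Ideal.sub_mem _ (Ideal.sub_mem _ h5 h6) (Ideal.mul_mem_left _ (C γ) mz)
            rw [lc_one, l2P, sum_ite_ne] at h7
            have : ∑ i, yP K n i + C γ * zP K n - (∑ i, yP K n i - yP K n k) - C γ * zP K n =
              yP K n k := by ring
            rwa [this] at h7
          · exact my k hk
      exact hh.1 (vars_mem hv hf)
  · rw [l0]; exact rs.1
  · rw [l1, L1]; exact rs.2
  · rw [hL2]; exact hd
  · rw [hL2]
    exact ⟨_, (hom_x.mul hom_z).mul (hom_s2 p a b), fun h => P3 ((tri2.hC _).1 h)⟩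

end chain


section final
variable {K : Type*} [Field K] {n : ℕ}

theorem third_index (hn : 3 ≤ n) (i j : Fin n) : ∃ k, k ≠ i ∧ k ≠ j := by
  by_contra! h
  have h1 : (Finset.univ : Finset (Fin n)) ⊆ {i, j} := by
    intro k _
    by_cases hk : k = i
    · simp [hk]
    · simp [h k hk]
  have h2 := Finset.card_le_card h1
  have h3 := Finset.card_le_two (a := i) (b := j)
  rw [Finset.card_univ, Fintype.card_fin] at h2
  omega

theorem dI_mem {i j : Fin n} (h : i ≠ j) :
    yP K n i * yP K n j - xP K n * zP K n ∈ diamondIdeal K n := by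
  rcases lt_or_gt_of_ne h with h | h
  · exact Ideal.subset_span ⟨i, j, h, rfl⟩
  · rw [mul_comm (yP K n i)]
    exact Ideal.subset_span ⟨j, i, h, rfl⟩

theorem reg_ideal (hn : 3 ≤ n) : RegEq (diamondIdeal K n) 3 := by
  let p : Fin n := ⟨0, by omega⟩
  have hc : ∑ i, cc p (1 : K) i = n := by simp [cc]
  have hI : HI (diamondIdeal K n) := by
    apply HI_span
    rintro f ⟨i, j, _, rfl⟩
    exact ⟨2, ((hom_y i).mul (hom_y j)).sub (hom_x.mul hom_z)⟩
  have hxz : xP K n * zP K n ∈ Ideal.span {xP K n * zP K n} := Ideal.mem_span_singleton_self _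
  have hIJ : JJ K n = diamondIdeal K n ⊔ Ideal.span {xP K n * zP K n} := by
    apply le_antisymm
    · refine sup_le (Ideal.span_le.2 ?_) le_sup_right
      rintro _ ⟨i, j, h, rfl⟩
      have := Submodule.add_mem_sup (dI_mem (K := K) h.ne) hxz
      rwa [sub_add_cancel] at this
    · refine sup_le (Ideal.span_le.2 ?_) le_sup_right
      rintro _ ⟨i, j, h, rfl⟩
      exact Ideal.sub_mem _ (Ideal.mem_sup_left (Ideal.subset_span ⟨i, j, h, rfl⟩))
        (Ideal.mem_sup_right hxz)
  have hIP : diamondIdeal K n ≤ TP p 1 ⊔ Ideal.span {q0P p 1} := by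
    refine Ideal.span_le.2 ?_
    rintro _ ⟨i, j, h, rfl⟩
    have h1 (i) : yP K n i - yP K n p ∈ TP p (1 : K) := by
      have := y_sub_mem p (1 : K) i
      simpa [cc] using this
    have : yP K n i * yP K n j - xP K n * zP K n = (yP K n j * (yP K n i - yP K n p) +
        yP K n p * (yP K n j - yP K n p)) + q0P p 1 := by
      rw [q0P, C_1]; ring
    rw [this]
    exact Submodule.add_mem_sup (Ideal.add_mem _ (Ideal.mul_mem_left _ _ (h1 i))
      (Ideal.mul_mem_left _ _ (h1 j))) (Ideal.mem_span_singleton_self _)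
  have hT : ∀ i, i ≠ p →
      xP K n * zP K n * (yP K n i - C 1 * yP K n p) ∈ diamondIdeal K n := by
    intro i hi
    obtain ⟨j, h1, h2⟩ := third_index hn i p
    have : xP K n * zP K n * (yP K n i - C 1 * yP K n p) =
        yP K n p * (yP K n j * yP K n i - xP K n * zP K n)
          - yP K n i * (yP K n j * yP K n p - xP K n * zP K n) := by
      rw [C_1]; ring
    rw [this]
    exact Ideal.sub_mem _ (Ideal.mul_mem_left _ _ (dI_mem h1)) (Ideal.mul_mem_left _ _ (dI_mem h2))
  have hq : xP K n * zP K n * q0P p 1 ∈ diamondIdeal K n := by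
    obtain ⟨j, h1, _⟩ := third_index hn p p
    obtain ⟨k, h2, h3⟩ := third_index hn p j
    have : xP K n * zP K n * q0P p 1 =
        (yP K n p * yP K n k) * (yP K n j * yP K n p - xP K n * zP K n)
          + xP K n * zP K n * (yP K n k * yP K n p - xP K n * zP K n)
          - yP K n p ^ 2 * (yP K n k * yP K n j - xP K n * zP K n) := by
      rw [q0P, C_1]; ring
    rw [this]
    exact Ideal.sub_mem _ (Ideal.add_mem _ (Ideal.mul_mem_left _ _ (dI_mem h1))
      (Ideal.mul_mem_left _ _ (dI_mem h2))) (Ideal.mul_mem_left _ _ (dI_mem h3))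
  by_cases hK : (n : K) = 0
  · exact reg_of p 1 1 1 0 (by simp) (by rw [hc, hK]; simp) hI hIJ hIP hT hq
  · exact reg_of p 1 0 0 (n : K)⁻¹ (by rw [hc]; simp [hK]) (by rw [hc]; simp [hK])
      hI hIJ hIP hT hq

theorem reg_ini (hn : 3 ≤ n) (hn1 : 1 ≤ n) : RegEq (diamondIni K n hn1) 3 := by
  let p : Fin n := ⟨n - 1, by omega⟩
  have hc : ∑ i, cc p (0 : K) i = 1 := by simp [cc]
  have m1 {i j : Fin n} (h : i < j) : yP K n i * yP K n j ∈ diamondIni K n hn1 :=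
    Ideal.subset_span (Or.inl (Or.inl ⟨i, j, h, rfl⟩))
  have m2 {k : Fin n} (h : k ≠ p) : xP K n * yP K n k * zP K n ∈ diamondIni K n hn1 := by
    refine Ideal.subset_span (Or.inl (Or.inr ⟨k, ?_, rfl⟩))
    by_contra h'
    have := k.2
    exact h (Fin.ext (by simp only [p]; omega))
  have m3 : xP K n * yP K n p ^ 2 * zP K n ∈ diamondIni K n hn1 :=
    Ideal.subset_span (Or.inr rfl)
  have hI : HI (diamondIni K n hn1) := by
    apply HI_span
    rintro f ((⟨i, j, _, rfl⟩ | ⟨k, _, rfl⟩) | rfl)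
    · exact ⟨2, (hom_y i).mul (hom_y j)⟩
    · exact ⟨3, (hom_x.mul (hom_y k)).mul hom_z⟩
    · exact ⟨1 + 1 * 2 + 1, (hom_x.mul ((hom_y _).pow 2)).mul hom_z⟩
  have hxz : xP K n * zP K n ∈ Ideal.span {xP K n * zP K n} := Ideal.mem_span_singleton_self _
  have hIJ : JJ K n = diamondIni K n hn1 ⊔ Ideal.span {xP K n * zP K n} := by
    apply le_antisymm
    · refine sup_le (Ideal.span_le.2 ?_) le_sup_right
      rintro _ ⟨i, j, h, rfl⟩
      exact Ideal.mem_sup_left (m1 h)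
    · refine sup_le (Ideal.span_le.2 ?_) le_sup_right
      rintro _ ((⟨i, j, h, rfl⟩ | ⟨k, _, rfl⟩) | rfl)
      · exact Ideal.mem_sup_left (Ideal.subset_span ⟨i, j, h, rfl⟩)
      · rw [mul_right_comm]
        exact Ideal.mul_mem_right _ _ (Ideal.mem_sup_right hxz)
      · rw [mul_right_comm]
        exact Ideal.mul_mem_right _ _ (Ideal.mem_sup_right hxz)
  have hy {i : Fin n} (h : i ≠ p) : yP K n i ∈ TP p (0 : K) :=
    Ideal.subset_span ⟨i, h, by simp⟩
  have hIP : diamondIni K n hn1 ≤ TP p 0 ⊔ Ideal.span {q0P p 0} := by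
    refine Ideal.span_le.2 ?_
    rintro _ ((⟨i, j, h, rfl⟩ | ⟨k, hk, rfl⟩) | rfl)
    · refine Ideal.mem_sup_left (Ideal.mul_mem_right _ _ (hy ?_))
      rintro rfl
      have := j.2
      rw [Fin.lt_def] at h
      simp only [p] at h
      omega
    · refine Ideal.mem_sup_left (Ideal.mul_mem_right _ _ (Ideal.mul_mem_left _ _ (hy ?_)))
      rintro rfl
      exact lt_irrefl _ hk
    · refine Ideal.mem_sup_right (Ideal.mul_mem_right _ _ (Ideal.mul_mem_left _ _ ?_))
      have : q0P p (0 : K) = yP K n p ^ 2 := by simp [q0P]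
      rw [this]
      exact Ideal.mem_span_singleton_self _
  refine reg_of p 0 1 1 0 (by simp) (by simp) hI hIJ hIP ?_ ?_
  · intro i hi
    have : xP K n * zP K n * (yP K n i - C 0 * yP K n p) = xP K n * yP K n i * zP K n := by
      rw [C_0]; ring
    rw [this]; exact m2 hi
  · have : xP K n * zP K n * q0P p 0 = xP K n * yP K n p ^ 2 * zP K n := by
      rw [q0P, C_0]; ring
    rw [this]; exact m3

end final

theorem diamond_reg_three (K : Type*) [Field K] (n : ℕ) (hn : 3 ≤ n) :
    RegEq (diamondIdeal K n) 3 ∧ RegEq (diamondIni K n (by omega)) 3 := by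
  exact ⟨reg_ideal hn, reg_ini hn _⟩
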